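/- arXiv:2212.03679 — 4 statements merged into one kernel-verified Lean document; each statement's English description precedes it below -/
import Mathlib

section
/- Let Δ be an irreducible reduced crystallographic root system of rank ℓ. List the positive roots by height: suppose there are m distinct heights and there are ℓ_i positive roots of height i for 1 ≤ i ≤ m. Then the order of the Weyl group W is |W| = 1^{ℓ−ℓ_1} · 2^{ℓ_1−ℓ_2} · 3^{ℓ_2−ℓ_3} ⋯ m^{ℓ_{m−1}−ℓ_m} · (m+1)^{ℓ_m}. -/
/-!
The formula combines an identity for the Weyl group with a monotonicity statement.

*The identity* `∏_{α > 0} (ht α + 1) = |W| ∏_{α > 0} ht α` (`prod_ht_add_one`). For a linear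
functional `φ` let `altSum φ = ∑_{w ∈ W} det(w) ∏_{α > 0} (φ(w α) + 1)`. It is anti-invariant under
`W`, hence vanishes as soon as `φ` kills a root (`altSum_eq_zero`, using that every root is
conjugate to a simple one). So it is divisible by `∏_{α > 0} φ(α)`, a polynomial of the same degree,
and comparing leading terms gives `altSum φ = |W| ∏_{α > 0} φ(α)`; to stay with polynomials in one
variable, this is done on a generic line through `ht`. At `φ = ht` only the term `w = 1` of the sum
survives: if `w ≠ 1`, some positive root `α` has `w α = -α_i`, and `ht(w α) + 1 = 0`
(`altSum_htL`, from the exchange condition).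

*The monotonicity* `ℓ_{k+1} ≤ ℓ_k` for `k ≥ 1` (`card_filter_ht_le`) is needed because the exponents
are truncated differences of natural numbers. It comes from the principal `𝔰𝔩₂`-triple acting
through the adjoint representation, realised by the matrices of Geck's construction: the semisimple
element acts on the root vector of `α` by `2 ht α`, and the lowering operator is injective on
eigenspaces with positive eigenvalue (`card_le_of_sl2`, `card_height_le`).

Grouping both products of the identity by height, `prod_telescope` turns it into the formula.
-/

open scoped BigOperators Classical

noncomputable section

/-- Data of a reduced crystallographic root system of rank `ℓ`, presented in coordinates
with respect to a fixed set of simple roots: the ambient space is `Fin ℓ → ℝ`, the simple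
roots `α_1, …, α_ℓ` are the standard basis vectors, and `B` is a symmetric positive-definite
bilinear form (the `W`-invariant inner product `(·,·)`).  A root `α = Σ c_i α_i` is recorded
by its coordinate vector `(c_1, …, c_ℓ)`. -/
structure RootSystemData (ℓ : ℕ) where
  /-- the invariant inner product `(·,·)` -/
  B : (Fin ℓ → ℝ) →ₗ[ℝ] (Fin ℓ → ℝ) →ₗ[ℝ] ℝ
  symm : ∀ x y, B x y = B y x
  posdef : ∀ x, x ≠ 0 → 0 < B x x
  /-- the (finite) set of roots -/
  Δ : Finset (Fin ℓ → ℝ)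
  zero_not_mem : (0 : Fin ℓ → ℝ) ∉ Δ
  /-- the simple roots are roots -/
  simple_mem : ∀ i, (Pi.single i 1 : Fin ℓ → ℝ) ∈ Δ
  /-- every root is an integral combination of the simple roots -/
  coords_int : ∀ α ∈ Δ, ∀ i, ∃ n : ℤ, α i = (n : ℝ)
  /-- every root is positive or negative -/
  sign : ∀ α ∈ Δ, (∀ i, 0 ≤ α i) ∨ (∀ i, α i ≤ 0)
  /-- crystallographic: `⟨α, β̌⟩ ∈ ℤ` -/
  crystal : ∀ α ∈ Δ, ∀ β ∈ Δ, ∃ n : ℤ, 2 * B α β / B β β = (n : ℝ)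
  /-- the set of roots is stable under all root reflections -/
  reflect_mem : ∀ α ∈ Δ, ∀ β ∈ Δ, α - (2 * B α β / B β β) • β ∈ Δ
  /-- reduced -/
  reduced : ∀ α ∈ Δ, ∀ c : ℝ, c • α ∈ Δ → c = 1 ∨ c = -1

namespace RootSystemData

variable {ℓ : ℕ} (rs : RootSystemData ℓ)

/-- The set `Δ₊` of positive roots. -/
def pos : Finset (Fin ℓ → ℝ) := rs.Δ.filter fun α => ∀ i, 0 ≤ α i

/-- The set `Δ₋` of negative roots. -/
def neg : Finset (Fin ℓ → ℝ) := rs.Δ.filter fun α => ∀ i, α i ≤ 0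

/-- The height `ht(α) = Σ c_i` of `α = Σ c_i α_i`. -/
def ht (_rs : RootSystemData ℓ) (α : Fin ℓ → ℝ) : ℝ := ∑ i, α i

/-- The pairing `⟨α, β̌⟩ = 2(α,β)/(β,β)`. -/
def pairing (α β : Fin ℓ → ℝ) : ℝ := 2 * rs.B α β / rs.B β β

/-- The coroot `β̌ = 2β/(β,β)`. -/
def coroot (β : Fin ℓ → ℝ) : Fin ℓ → ℝ := (2 / rs.B β β) • β

/-- The linear functional `⟨·, β̌⟩`. -/
def copairing (β : Fin ℓ → ℝ) : Module.Dual ℝ (Fin ℓ → ℝ) :=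
  (2 / rs.B β β) • rs.B.flip β

lemma single_ne_zero' (i : Fin ℓ) : (Pi.single i 1 : Fin ℓ → ℝ) ≠ 0 := by
  intro h
  have := congrFun h i
  simp at this

lemma copairing_simple_self (i : Fin ℓ) :
    rs.copairing (Pi.single i 1) (Pi.single i 1) = 2 := by
  have hB : rs.B (Pi.single i 1) (Pi.single i 1) ≠ 0 :=
    ne_of_gt (rs.posdef _ (single_ne_zero' i))
  simp only [copairing, LinearMap.smul_apply, LinearMap.flip_apply, smul_eq_mul]
  field_simp

/-- The simple reflection `s_i`, as a linear automorphism of the ambient space. -/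
def simpleRefl (i : Fin ℓ) : (Fin ℓ → ℝ) ≃ₗ[ℝ] (Fin ℓ → ℝ) :=
  Module.reflection (rs.copairing_simple_self i)

/-- The Weyl group `W`, the group generated by the simple reflections. -/
def weylGroup : Subgroup ((Fin ℓ → ℝ) ≃ₗ[ℝ] (Fin ℓ → ℝ)) :=
  Subgroup.closure (Set.range rs.simpleRefl)

/-- The length `l(w)`: the minimal number of simple reflections in an expression for `w`. -/
def length (w : (Fin ℓ → ℝ) ≃ₗ[ℝ] (Fin ℓ → ℝ)) : ℕ :=
  sInf {n | ∃ f : Fin n → Fin ℓ, w = (List.ofFn fun k => rs.simpleRefl (f k)).prod}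

/-- Irreducibility: `Δ` cannot be split into two nonempty mutually orthogonal parts. -/
def IsIrreducible : Prop :=
  ∀ S : Finset (Fin ℓ → ℝ), S ⊆ rs.Δ → S.Nonempty → (rs.Δ \ S).Nonempty →
    ∃ α ∈ S, ∃ β ∈ rs.Δ \ S, rs.B α β ≠ 0

end RootSystemData

open RootSystemData

namespace RootSystemData

/-! ### Roots, simple reflections and the Weyl group -/

section Weyl

variable {ℓ : ℕ} (rs : RootSystemData ℓ)

/-- The simple root `α_i`, i.e. the `i`-th standard basis vector. -/
abbrev sr (i : Fin ℓ) : Fin ℓ → ℝ := Pi.single i 1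

/-- The height as a linear functional on the ambient space. -/
def htL (ℓ : ℕ) : (Fin ℓ → ℝ) →ₗ[ℝ] ℝ := ∑ i, LinearMap.proj i

lemma htL_apply (x : Fin ℓ → ℝ) : htL ℓ x = ∑ i, x i := by
  simp [htL]

lemma htL_sr (i : Fin ℓ) : htL ℓ (sr i) = 1 := by
  simp [htL_apply, sr]

lemma mem_pos {α : Fin ℓ → ℝ} : α ∈ rs.pos ↔ α ∈ rs.Δ ∧ ∀ i, 0 ≤ α i := by
  simp [pos]

lemma ne_zero_of_mem {α : Fin ℓ → ℝ} (h : α ∈ rs.Δ) : α ≠ 0 := by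
  rintro rfl; exact rs.zero_not_mem h

lemma B_pos {α : Fin ℓ → ℝ} (h : α ∈ rs.Δ) : 0 < rs.B α α :=
  rs.posdef α (rs.ne_zero_of_mem h)

lemma neg_mem {α : Fin ℓ → ℝ} (h : α ∈ rs.Δ) : -α ∈ rs.Δ := by
  have h1 := rs.reflect_mem α h α h
  have h2 := (rs.B_pos h).ne'
  rw [mul_div_assoc, div_self h2] at h1
  convert h1 using 1
  module

lemma mem_pos_or_neg {α : Fin ℓ → ℝ} (h : α ∈ rs.Δ) : α ∈ rs.pos ∨ -α ∈ rs.pos := by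
  rcases rs.sign α h with h1 | h1
  · exact Or.inl (rs.mem_pos.2 ⟨h, h1⟩)
  · exact Or.inr (rs.mem_pos.2 ⟨rs.neg_mem h, fun i => by simpa using h1 i⟩)

lemma not_neg_mem_pos {α : Fin ℓ → ℝ} (h : α ∈ rs.pos) : -α ∉ rs.pos := by
  intro h'
  rw [mem_pos] at h h'
  apply rs.ne_zero_of_mem h.1
  ext i
  have h1 := h.2 i
  have h2 := h'.2 i
  simp only [Pi.neg_apply] at h2
  simp only [Pi.zero_apply]
  linarith

lemma sr_mem_pos (i : Fin ℓ) : sr i ∈ rs.pos := by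
  rw [mem_pos]
  refine ⟨rs.simple_mem i, fun j => ?_⟩
  by_cases h : j = i
  · subst h; simp
  · simp [h]

lemma htL_pos {α : Fin ℓ → ℝ} (h : α ∈ rs.pos) : 0 < htL ℓ α := by
  rw [mem_pos] at h
  rw [htL_apply]
  obtain ⟨i, hi⟩ := Function.ne_iff.1 (rs.ne_zero_of_mem h.1)
  exact Finset.sum_pos' (fun i _ => h.2 i)
    ⟨i, Finset.mem_univ _, lt_of_le_of_ne (h.2 i) (Ne.symm hi)⟩

lemma simpleRefl_apply (i : Fin ℓ) (x : Fin ℓ → ℝ) :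
    rs.simpleRefl i x = x - (2 * rs.B x (sr i) / rs.B (sr i) (sr i)) • sr i := by
  rw [simpleRefl, Module.reflection_apply]
  congr 2
  simp only [copairing, LinearMap.smul_apply, LinearMap.flip_apply, smul_eq_mul]
  ring

lemma simpleRefl_invol (i : Fin ℓ) (x : Fin ℓ → ℝ) :
    rs.simpleRefl i (rs.simpleRefl i x) = x :=
  Module.involutive_reflection (rs.copairing_simple_self i) x

lemma simpleRefl_mul_self (i : Fin ℓ) : rs.simpleRefl i * rs.simpleRefl i = 1 := by
  ext1 x
  exact rs.simpleRefl_invol i x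

lemma simpleRefl_sr (i : Fin ℓ) : rs.simpleRefl i (sr i) = -sr i := by
  rw [simpleRefl_apply, mul_div_assoc, div_self (rs.B_pos (rs.simple_mem i)).ne']
  module

lemma simpleRefl_mem {α : Fin ℓ → ℝ} (i : Fin ℓ) (h : α ∈ rs.Δ) : rs.simpleRefl i α ∈ rs.Δ := by
  rw [simpleRefl_apply]
  exact rs.reflect_mem α h _ (rs.simple_mem i)

lemma simpleRefl_B (i : Fin ℓ) (x y : Fin ℓ → ℝ) :
    rs.B (rs.simpleRefl i x) (rs.simpleRefl i y) = rs.B x y := by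
  have h := (rs.B_pos (rs.simple_mem i)).ne'
  simp only [simpleRefl_apply, map_sub, map_smul, LinearMap.sub_apply, LinearMap.smul_apply,
    smul_eq_mul, rs.symm (sr i) y]
  field_simp
  ring

lemma det_simpleRefl (i : Fin ℓ) :
    LinearMap.det (rs.simpleRefl i : (Fin ℓ → ℝ) →ₗ[ℝ] (Fin ℓ → ℝ)) = -1 := by
  have h : (rs.simpleRefl i : (Fin ℓ → ℝ) →ₗ[ℝ] (Fin ℓ → ℝ)) =
      LinearMap.transvection (rs.copairing (sr i)) (-sr i) := by
    refine LinearMap.ext fun x => ?_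
    change Module.reflection _ x = x + rs.copairing (sr i) x • (-sr i)
    rw [Module.reflection_apply, smul_neg, sub_eq_add_neg]
  rw [h, LinearMap.transvection.det, map_neg, rs.copairing_simple_self i]
  norm_num

/-- A simple reflection `s_i` permutes the positive roots other than `α_i`: subtracting a
multiple of `α_i` leaves all other coordinates unchanged, and one of these is positive. -/
lemma simpleRefl_mem_pos {α : Fin ℓ → ℝ} {i : Fin ℓ} (h : α ∈ rs.pos) (hne : α ≠ sr i) :
    rs.simpleRefl i α ∈ rs.pos := by
  have hα := rs.mem_pos.1 h
  have hj : ∃ j, j ≠ i ∧ 0 < α j := by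
    by_contra! hcon
    have h1 : α = α i • sr i := by
      ext j
      by_cases hji : j = i
      · subst hji; simp
      · simp [hji, le_antisymm (hcon j hji) (hα.2 j)]
    rcases rs.reduced _ (rs.simple_mem i) (α i) (h1 ▸ hα.1) with h2 | h2
    · rw [h2, one_smul] at h1; exact hne h1
    · have := hα.2 i
      linarith
  obtain ⟨j, hji, hj⟩ := hj
  have hm := rs.simpleRefl_mem i hα.1
  rcases rs.sign _ hm with h1 | h1
  · exact rs.mem_pos.2 ⟨hm, h1⟩
  · have := h1 j
    rw [simpleRefl_apply] at this
    simp [hji] at this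
    linarith

lemma simpleRefl_mem_weylGroup (i : Fin ℓ) : rs.simpleRefl i ∈ rs.weylGroup :=
  Subgroup.subset_closure ⟨i, rfl⟩

/-- The product of the word `L` in the simple reflections. -/
def word (L : List (Fin ℓ)) : (Fin ℓ → ℝ) ≃ₗ[ℝ] (Fin ℓ → ℝ) := (L.map rs.simpleRefl).prod

@[simp] lemma word_nil : rs.word [] = 1 := rfl

@[simp] lemma word_cons (i : Fin ℓ) (L : List (Fin ℓ)) :
    rs.word (i :: L) = rs.simpleRefl i * rs.word L := by simp [word]

@[simp] lemma word_append (L L' : List (Fin ℓ)) :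
    rs.word (L ++ L') = rs.word L * rs.word L' := by simp [word]

lemma word_reverse_mul (L : List (Fin ℓ)) : rs.word L.reverse * rs.word L = 1 := by
  induction L with
  | nil => simp
  | cons i L ih =>
    simp only [List.reverse_cons, word_append, word_cons, word_nil, mul_one]
    calc rs.word L.reverse * rs.simpleRefl i * (rs.simpleRefl i * rs.word L)
        = rs.word L.reverse * (rs.simpleRefl i * rs.simpleRefl i) * rs.word L := by
          simp only [mul_assoc]
      _ = 1 := by rw [simpleRefl_mul_self, mul_one, ih]

lemma exists_word {w : (Fin ℓ → ℝ) ≃ₗ[ℝ] (Fin ℓ → ℝ)} (hw : w ∈ rs.weylGroup) :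
    ∃ L, rs.word L = w := by
  induction hw using Subgroup.closure_induction with
  | mem x hx => obtain ⟨i, rfl⟩ := hx; exact ⟨[i], by simp⟩
  | one => exact ⟨[], rfl⟩
  | mul x y _ _ hx hy =>
    obtain ⟨L, rfl⟩ := hx
    obtain ⟨L', rfl⟩ := hy
    exact ⟨L ++ L', by simp⟩
  | inv x _ hx =>
    obtain ⟨L, rfl⟩ := hx
    exact ⟨L.reverse, eq_inv_of_mul_eq_one_left (rs.word_reverse_mul L)⟩

lemma word_mem (L : List (Fin ℓ)) {α : Fin ℓ → ℝ} (h : α ∈ rs.Δ) : rs.word L α ∈ rs.Δ := by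
  induction L with
  | nil => simpa
  | cons i L ih =>
    rw [word_cons]
    exact rs.simpleRefl_mem i ih

lemma word_B (L : List (Fin ℓ)) (x y : Fin ℓ → ℝ) :
    rs.B (rs.word L x) (rs.word L y) = rs.B x y := by
  induction L with
  | nil => simp
  | cons i L ih =>
    rw [word_cons]
    exact (rs.simpleRefl_B i _ _).trans ih

lemma weyl_mem {w : (Fin ℓ → ℝ) ≃ₗ[ℝ] (Fin ℓ → ℝ)} (hw : w ∈ rs.weylGroup) {α : Fin ℓ → ℝ}
    (h : α ∈ rs.Δ) : w α ∈ rs.Δ := by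
  obtain ⟨L, rfl⟩ := rs.exists_word hw
  exact rs.word_mem L h

/-- If `w α_i = α_j` then `w s_i = s_j w`, since `w` is an isometry. -/
lemma word_conj (L : List (Fin ℓ)) {i j : Fin ℓ} (h : rs.word L (sr i) = sr j) :
    rs.word L * rs.simpleRefl i = rs.simpleRefl j * rs.word L := by
  ext1 x
  change rs.word L (rs.simpleRefl i x) = rs.simpleRefl j (rs.word L x)
  rw [simpleRefl_apply, simpleRefl_apply, ← h, word_B, word_B, map_sub, map_smul]

/-- The exchange condition: if `w = word L` sends `α_i` to a negative root, then `w s_i` is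
obtained from `L` by deleting a letter. -/
lemma exchange (L : List (Fin ℓ)) (i : Fin ℓ) (h : -(rs.word L (sr i)) ∈ rs.pos) :
    ∃ L', L'.length + 1 = L.length ∧ rs.word L' = rs.word L * rs.simpleRefl i := by
  induction L with
  | nil => exact absurd h (rs.not_neg_mem_pos (rs.sr_mem_pos i))
  | cons j L ih =>
    rcases rs.mem_pos_or_neg (rs.word_mem L (rs.simple_mem i)) with h1 | h1
    · by_cases h2 : rs.word L (sr i) = sr j
      · refine ⟨L, rfl, ?_⟩
        rw [word_cons, mul_assoc, rs.word_conj L h2, ← mul_assoc, simpleRefl_mul_self, one_mul]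
      · rw [word_cons] at h
        exact absurd h (rs.not_neg_mem_pos (rs.simpleRefl_mem_pos h1 h2))
    · obtain ⟨L', hl, hL'⟩ := ih h1
      exact ⟨j :: L', by simp [hl], by rw [word_cons, hL', word_cons, mul_assoc]⟩

/-- A nontrivial element of the Weyl group sends some simple root to a negative root: the last
letter of a word of minimal length is such a simple root. -/
lemma exists_neg_of_ne_one {w : (Fin ℓ → ℝ) ≃ₗ[ℝ] (Fin ℓ → ℝ)} (hw : w ∈ rs.weylGroup)
    (hne : w ≠ 1) : ∃ i, -(w (sr i)) ∈ rs.pos := by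
  by_contra! hcon
  have hex : ∃ n, ∃ L : List (Fin ℓ), L.length = n ∧ rs.word L = w := by
    obtain ⟨L, hL⟩ := rs.exists_word hw
    exact ⟨_, L, rfl, hL⟩
  obtain ⟨L, hlen, hL⟩ := Nat.find_spec hex
  rcases List.eq_nil_or_concat L with rfl | ⟨L0, i, rfl⟩
  · exact hne hL.symm
  · have h1 : rs.word L0 (sr i) = -(w (sr i)) := by
      rw [← hL, List.concat_eq_append, word_append, word_cons, word_nil, mul_one]
      change _ = -(rs.word L0 (rs.simpleRefl i (sr i)))
      rw [simpleRefl_sr, map_neg, neg_neg]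
    have h2 : -(rs.word L0 (sr i)) ∈ rs.pos := by
      rcases rs.mem_pos_or_neg (rs.weyl_mem hw (rs.simple_mem i)) with h3 | h3
      · rwa [h1, neg_neg]
      · exact absurd h3 (hcon i)
    obtain ⟨L', hl, hL'⟩ := rs.exchange L0 i h2
    refine Nat.find_min hex (m := L'.length) ?_ ⟨L', rfl, ?_⟩
    · rw [← hlen]; simp; omega
    · rw [hL', ← hL]; simp

/-- Every positive root is conjugate to a simple root under the Weyl group: a non-simple
positive root has positive inner product with some simple root `α_i`, and `s_i` lowers its
height while keeping it positive. -/
lemma exists_conj_simple {α : Fin ℓ → ℝ} (h : α ∈ rs.pos) :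
    ∃ w ∈ rs.weylGroup, ∃ i, w (sr i) = α := by
  obtain ⟨n, hn⟩ := exists_nat_gt (htL ℓ α)
  induction n generalizing α with
  | zero =>
    have := rs.htL_pos h
    norm_num at hn
    linarith
  | succ n ih =>
    by_cases hs : ∃ i, α = sr i
    · obtain ⟨i, rfl⟩ := hs
      exact ⟨1, one_mem _, i, rfl⟩
    push Not at hs
    have hα := rs.mem_pos.1 h
    have hi : ∃ i, 0 < rs.B α (sr i) := by
      by_contra! hcon
      have h1 : rs.B α α = ∑ i, α i * rs.B α (sr i) := by
        have he : α = ∑ i, α i • sr i := pi_eq_sum_univ' α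
        have h2 := congrArg (rs.B α) he
        simpa only [map_sum, map_smul, smul_eq_mul] using h2
      have h2 : rs.B α α ≤ 0 := by
        rw [h1]
        exact Finset.sum_nonpos fun i _ => mul_nonpos_of_nonneg_of_nonpos (hα.2 i) (hcon i)
      exact absurd (rs.B_pos hα.1) (not_lt.2 h2)
    obtain ⟨i, hi⟩ := hi
    obtain ⟨c, hc⟩ := rs.crystal α hα.1 _ (rs.simple_mem i)
    have hc0 : (0 : ℝ) < c := by
      rw [← hc]
      have := rs.B_pos (rs.simple_mem i)
      positivity
    have hc1 : (1 : ℝ) ≤ c := by exact_mod_cast (by exact_mod_cast hc0 : (0 : ℤ) < c)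
    obtain ⟨w, hw, j, hj⟩ := ih (rs.simpleRefl_mem_pos h (hs i)) (by
      rw [simpleRefl_apply, hc, map_sub, map_smul, htL_sr, smul_eq_mul, mul_one]
      push_cast at hn
      linarith)
    refine ⟨rs.simpleRefl i * w, mul_mem (rs.simpleRefl_mem_weylGroup i) hw, j, ?_⟩
    change rs.simpleRefl i (w (sr j)) = α
    rw [hj, simpleRefl_invol]

instance finite_weylGroup : Finite rs.weylGroup := by
  -- a Weyl group element is determined by the images of the simple roots
  let F : rs.weylGroup → (Fin ℓ → rs.Δ) := fun w i => ⟨w.1 (sr i), rs.weyl_mem w.2 (rs.simple_mem i)⟩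
  refine Finite.of_injective F fun w w' h => ?_
  apply Subtype.ext
  apply LinearEquiv.toLinearMap_injective
  refine LinearMap.pi_ext' fun i => ?_
  ext1
  have := congrArg Subtype.val (congrFun h i)
  simpa [F] using this

/-- `det` as a real-valued function on the linear automorphisms. -/
def sgn (w : (Fin ℓ → ℝ) ≃ₗ[ℝ] (Fin ℓ → ℝ)) : ℝ :=
  LinearMap.det (w : (Fin ℓ → ℝ) →ₗ[ℝ] (Fin ℓ → ℝ))

lemma sgn_mul (v w : (Fin ℓ → ℝ) ≃ₗ[ℝ] (Fin ℓ → ℝ)) : sgn (v * w) = sgn v * sgn w := by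
  rw [sgn, sgn, sgn, ← LinearMap.det_comp]
  rfl

lemma sgn_one : sgn (1 : (Fin ℓ → ℝ) ≃ₗ[ℝ] (Fin ℓ → ℝ)) = 1 := LinearMap.det_id

lemma sgn_mul_self {w : (Fin ℓ → ℝ) ≃ₗ[ℝ] (Fin ℓ → ℝ)} (hw : w ∈ rs.weylGroup) :
    sgn w * sgn w = 1 := by
  obtain ⟨L, rfl⟩ := rs.exists_word hw
  induction L with
  | nil => simp [sgn_one]
  | cons i L ih =>
    have h1 : sgn (rs.simpleRefl i) = -1 := rs.det_simpleRefl i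
    have ih := ih (by
      have := mul_mem (rs.simpleRefl_mem_weylGroup i) hw
      rwa [word_cons, ← mul_assoc, simpleRefl_mul_self, one_mul] at this)
    rw [word_cons, sgn_mul, h1]
    linarith

/-- The product of the positive roots is anti-invariant under a simple reflection. -/
lemma prod_simpleRefl (i : Fin ℓ) (y : (Fin ℓ → ℝ) →ₗ[ℝ] ℝ) :
    ∏ α ∈ rs.pos, y (rs.simpleRefl i α) = - ∏ α ∈ rs.pos, y α := by
  rw [← Finset.mul_prod_erase _ _ (rs.sr_mem_pos i), ← Finset.mul_prod_erase _ _ (rs.sr_mem_pos i),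
    simpleRefl_sr, map_neg, neg_mul]
  congr 2
  have key : ∀ α ∈ rs.pos.erase (sr i), rs.simpleRefl i α ∈ rs.pos.erase (sr i) := by
    intro α hα
    rw [Finset.mem_erase] at hα ⊢
    refine ⟨fun h => ?_, rs.simpleRefl_mem_pos hα.2 hα.1⟩
    have h1 : α = -sr i := by rw [← rs.simpleRefl_invol i α, h, simpleRefl_sr]
    exact rs.not_neg_mem_pos (rs.sr_mem_pos i) (h1 ▸ hα.2)
  exact Finset.prod_nbij' (rs.simpleRefl i) (rs.simpleRefl i) key key
    (fun α _ => rs.simpleRefl_invol i α) (fun α _ => rs.simpleRefl_invol i α) (fun _ _ => rfl)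

lemma prod_weyl {w : (Fin ℓ → ℝ) ≃ₗ[ℝ] (Fin ℓ → ℝ)} (hw : w ∈ rs.weylGroup)
    (y : (Fin ℓ → ℝ) →ₗ[ℝ] ℝ) :
    ∏ α ∈ rs.pos, y (w α) = sgn w * ∏ α ∈ rs.pos, y α := by
  obtain ⟨L, rfl⟩ := rs.exists_word hw
  clear hw
  induction L generalizing y with
  | nil => simp [sgn_one]
  | cons i L ih =>
    have h1 : sgn (rs.simpleRefl i) = -1 := rs.det_simpleRefl i
    have h2 := ih (y ∘ₗ (rs.simpleRefl i : (Fin ℓ → ℝ) →ₗ[ℝ] (Fin ℓ → ℝ)))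
    simp only [LinearMap.comp_apply, LinearEquiv.coe_coe] at h2
    rw [prod_simpleRefl] at h2
    rw [word_cons, sgn_mul, h1]
    simp only [LinearEquiv.mul_apply]
    rw [h2]
    ring

/-! ### The alternating sum over the Weyl group -/

/-- The alternating sum `∑_{w ∈ W} det(w) ∏_{α > 0} (φ(w α) + 1)`. -/
def altSum (φ : (Fin ℓ → ℝ) →ₗ[ℝ] ℝ) : ℝ :=
  ∑ᶠ w : rs.weylGroup, sgn w.1 * ∏ α ∈ rs.pos, (φ (w.1 α) + 1)

lemma altSum_comp (φ : (Fin ℓ → ℝ) →ₗ[ℝ] ℝ) {u : (Fin ℓ → ℝ) ≃ₗ[ℝ] (Fin ℓ → ℝ)}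
    (hu : u ∈ rs.weylGroup) :
    rs.altSum (φ ∘ₗ (u : (Fin ℓ → ℝ) →ₗ[ℝ] (Fin ℓ → ℝ))) = sgn u * rs.altSum φ := by
  rw [altSum, altSum, mul_finsum,
    ← finsum_comp_equiv (Equiv.mulLeft (⟨u, hu⟩ : rs.weylGroup))
      (f := fun w => sgn u * (sgn w.1 * ∏ α ∈ rs.pos, (φ (w.1 α) + 1)))]
  refine finsum_congr fun w => ?_
  simp only [Equiv.coe_mulLeft, Subgroup.coe_mul, sgn_mul, ← mul_assoc, rs.sgn_mul_self hu, one_mul]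
  rfl

lemma altSum_eq_zero {φ : (Fin ℓ → ℝ) →ₗ[ℝ] ℝ} {α : Fin ℓ → ℝ} (hα : α ∈ rs.pos)
    (h : φ α = 0) : rs.altSum φ = 0 := by
  obtain ⟨u, hu, i, hi⟩ := rs.exists_conj_simple hα
  have h1 := rs.altSum_comp φ hu
  set ψ := φ ∘ₗ (u : (Fin ℓ → ℝ) →ₗ[ℝ] (Fin ℓ → ℝ)) with hψ
  have h2 : ψ ∘ₗ (rs.simpleRefl i : (Fin ℓ → ℝ) →ₗ[ℝ] (Fin ℓ → ℝ)) = ψ := by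
    refine LinearMap.ext fun x => ?_
    have h0 : ψ (sr i) = 0 := by simp [hψ, hi, h]
    simp only [LinearMap.comp_apply (f := ψ), LinearEquiv.coe_coe, simpleRefl_apply, map_sub,
      map_smul, h0, smul_zero, sub_zero]
  have h3 := rs.altSum_comp ψ (rs.simpleRefl_mem_weylGroup i)
  rw [h2, show sgn (rs.simpleRefl i) = -1 from rs.det_simpleRefl i] at h3
  have h4 : sgn u * rs.altSum φ = 0 := by linarith
  have h5 := rs.sgn_mul_self hu
  calc rs.altSum φ = (sgn u * sgn u) * rs.altSum φ := by rw [h5, one_mul]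
    _ = sgn u * (sgn u * rs.altSum φ) := by ring
    _ = 0 := by rw [h4, mul_zero]

lemma altSum_htL : rs.altSum (htL ℓ) = ∏ α ∈ rs.pos, (htL ℓ α + 1) := by
  rw [altSum, finsum_eq_single _ (1 : rs.weylGroup)]
  · simp [sgn_one]
  · intro w hw
    have h1 : w.1⁻¹ ≠ 1 := by
      intro h
      exact hw (Subtype.ext (inv_eq_one.1 h))
    obtain ⟨i, hi⟩ := rs.exists_neg_of_ne_one (inv_mem w.2) h1
    rw [Finset.prod_eq_zero hi, mul_zero]
    have h2 : w.1 (w.1⁻¹ (sr i)) = sr i := by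
      rw [← LinearEquiv.mul_apply, mul_inv_cancel]; rfl
    rw [map_neg, h2, map_neg, htL_sr]
    norm_num

/-- A direction `y` such that the line `t ↦ ht + t y` meets the hyperplanes `{φ | φ(α) = 0}`,
for the positive roots `α`, in pairwise different points. -/
lemma exists_generic : ∃ y : (Fin ℓ → ℝ) →ₗ[ℝ] ℝ, (∀ α ∈ rs.pos, y α ≠ 0) ∧
    ∀ α ∈ rs.pos, ∀ β ∈ rs.pos, α ≠ β → htL ℓ α * y β - htL ℓ β * y α ≠ 0 := by
  let v : rs.pos × rs.pos → (Fin ℓ → ℝ) := fun p =>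
    if p.1 = p.2 then p.1.1 else htL ℓ p.1.1 • p.2.1 - htL ℓ p.2.1 • p.1.1
  have hv : ∀ p, v p ≠ 0 := by
    rintro ⟨⟨α, hα⟩, ⟨β, hβ⟩⟩
    have hα' := rs.mem_pos.1 hα
    have hβ' := rs.mem_pos.1 hβ
    by_cases h : α = β
    · subst h
      simpa [v] using rs.ne_zero_of_mem hα'.1
    · simp only [v, Subtype.mk.injEq, h, if_false]
      intro h0
      have hp := rs.htL_pos hα
      have hq := rs.htL_pos hβ
      have h1 : (htL ℓ β / htL ℓ α) • α = β := by
        rw [div_eq_inv_mul, mul_smul, ← sub_eq_zero.1 h0, smul_smul, inv_mul_cancel₀ hp.ne',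
          one_smul]
      rcases rs.reduced α hα'.1 _ (h1.symm ▸ hβ'.1) with h2 | h2
      · rw [h2, one_smul] at h1
        exact h h1
      · have : 0 < htL ℓ β / htL ℓ α := by positivity
        linarith
  obtain ⟨y, hy⟩ := Module.exists_dual_forall_apply_ne_zero (K := ℝ) v hv
  refine ⟨y, fun α hα => ?_, fun α hα β hβ hne => ?_⟩
  · simpa [v] using hy (⟨α, hα⟩, ⟨α, hα⟩)
  · have := hy (⟨α, hα⟩, ⟨β, hβ⟩)
    simpa [v, hne] using this

open Polynomial in
lemma natDegree_lin_le (a b : ℝ) : (C a + C b * X : ℝ[X]).natDegree ≤ 1 := by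
  compute_degree

open Polynomial in
lemma coeff_lin (a b : ℝ) : (C a + C b * X : ℝ[X]).coeff 1 = b := by
  simp [coeff_C]

open Polynomial in
/-- Restricted to a generic line through `ht`, both `altSum` and `|W| ∏_{α > 0} φ(α)` become
polynomials in one variable with the same coefficient in degree `#Δ₊`, and they vanish at the
same `#Δ₊` points; hence they agree at `ht`. -/
theorem prod_ht_add_one :
    ∏ α ∈ rs.pos, (htL ℓ α + 1) = Nat.card rs.weylGroup * ∏ α ∈ rs.pos, htL ℓ α := by
  cases nonempty_fintype rs.weylGroup
  obtain ⟨y, hy0, hy⟩ := rs.exists_generic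
  let F : ℝ[X] := ∑ w : rs.weylGroup,
    C (sgn w.1) * ∏ α ∈ rs.pos, (C (htL ℓ (w.1 α) + 1) + C (y (w.1 α)) * X)
  let G : ℝ[X] := C (Nat.card rs.weylGroup : ℝ) * ∏ α ∈ rs.pos, (C (htL ℓ α) + C (y α) * X)
  have hF : ∀ t, F.eval t = rs.altSum (htL ℓ + t • y) := by
    intro t
    rw [altSum, finsum_eq_sum_of_fintype]
    simp only [F, eval_finsetSum, eval_mul, eval_C, eval_prod, eval_add, eval_X,
      LinearMap.add_apply, LinearMap.smul_apply, smul_eq_mul]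
    refine Finset.sum_congr rfl fun w _ => ?_
    congr 1
    refine Finset.prod_congr rfl fun α _ => ?_
    ring
  have hdeg : ∀ a b : (Fin ℓ → ℝ) → ℝ,
      (∏ α ∈ rs.pos, (C (a α) + C (b α) * X : ℝ[X])).natDegree ≤ rs.pos.card := by
    intro a b
    refine (natDegree_prod_le _ _).trans ?_
    simpa using Finset.sum_le_card_nsmul rs.pos _ 1 fun α _ => natDegree_lin_le (a α) (b α)
  have hcoeff : ∀ a b : (Fin ℓ → ℝ) → ℝ,
      (∏ α ∈ rs.pos, (C (a α) + C (b α) * X : ℝ[X])).coeff rs.pos.card = ∏ α ∈ rs.pos, b α := by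
    intro a b
    have := coeff_prod_of_natDegree_le rs.pos (fun α => (C (a α) + C (b α) * X : ℝ[X])) 1
      fun α _ => natDegree_lin_le (a α) (b α)
    rw [mul_one] at this
    rw [this]
    exact Finset.prod_congr rfl fun α _ => coeff_lin _ _
  have hlow : (F - G).degree < rs.pos.card := by
    rw [degree_lt_iff_coeff_zero]
    intro k hk
    rcases hk.eq_or_lt with rfl | hk
    · simp only [F, G, coeff_sub, finsetSum_coeff, coeff_C_mul]
      rw [hcoeff (fun α => htL ℓ α) (fun α => y α)]
      have : ∀ w : rs.weylGroup, sgn w.1 *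
          (∏ α ∈ rs.pos, (C (htL ℓ (w.1 α) + 1) + C (y (w.1 α)) * X)).coeff rs.pos.card =
          ∏ α ∈ rs.pos, y α := by
        intro w
        rw [hcoeff (fun α => htL ℓ (w.1 α) + 1) (fun α => y (w.1 α)), rs.prod_weyl w.2 y,
          ← mul_assoc, rs.sgn_mul_self w.2, one_mul]
      rw [Finset.sum_congr rfl fun w _ => this w]
      simp [Nat.card_eq_fintype_card]
    · simp only [F, G, coeff_sub, finsetSum_coeff, coeff_C_mul]
      rw [coeff_eq_zero_of_natDegree_lt ((hdeg (fun α => htL ℓ α) (fun α => y α)).trans_lt hk)]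
      rw [Finset.sum_eq_zero, mul_zero, sub_zero]
      intro w _
      rw [coeff_eq_zero_of_natDegree_lt
        ((hdeg (fun α => htL ℓ (w.1 α) + 1) (fun α => y (w.1 α))).trans_lt hk), mul_zero]
  let τ : (Fin ℓ → ℝ) → ℝ := fun α => -htL ℓ α / y α
  have hτ : Set.InjOn τ rs.pos := by
    intro α hα β hβ h
    by_contra hne
    apply hy α hα β hβ hne
    have h1 := hy0 α hα
    have h2 := hy0 β hβ
    simp only [τ] at h
    rw [div_eq_div_iff h1 h2] at h
    linarith
  have hzero : F - G = 0 := by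
    refine eq_zero_of_degree_lt_of_eval_finset_eq_zero (rs.pos.image τ) ?_ ?_
    · rwa [Finset.card_image_of_injOn hτ]
    · intro t ht
      obtain ⟨α, hα, rfl⟩ := Finset.mem_image.1 ht
      have h0 : htL ℓ α + τ α * y α = 0 := by
        simp only [τ]
        rw [div_mul_cancel₀ _ (hy0 α hα)]
        ring
      rw [eval_sub, hF, rs.altSum_eq_zero hα (by simpa using h0)]
      simp only [G, eval_mul, eval_C, eval_prod, eval_add, eval_X]
      rw [Finset.prod_eq_zero hα (by linarith), mul_zero, sub_zero]
  have h0 : F.eval 0 = G.eval 0 := by rw [sub_eq_zero.1 hzero]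
  rw [hF, zero_smul, add_zero, altSum_htL] at h0
  simpa [G, eval_prod] using h0

end Weyl


/-! ### Monotonicity of the height distribution -/

section Matrix

variable {n : Type*} [Fintype n] [DecidableEq n] {D : n → ℝ} {E F : Matrix n n ℝ}

open Matrix in
/-- For an `𝔰𝔩₂`-triple of matrices `(H, E, F)` with `H` diagonal, the lowering operator `F` has no
kernel on eigenspaces of `H` with positive eigenvalue: otherwise all the vectors `E ^ k x` would be
nonzero eigenvectors with distinct eigenvalues. -/
lemma eq_zero_of_lower_eq_zero (hEF : E * F - F * E = diagonal D)
    (hHE : diagonal D * E - E * diagonal D = (2 : ℝ) • E) {μ : ℝ} (hμ : 0 < μ) {x : n → ℝ}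
    (hx : diagonal D *ᵥ x = μ • x) (hFx : F *ᵥ x = 0) : x = 0 := by
  by_contra hne
  let X : ℕ → n → ℝ := fun k => (fun v => E *ᵥ v)^[k] x
  have hX : ∀ k, X (k + 1) = E *ᵥ X k := fun k => Function.iterate_succ_apply' _ _ _
  have hH : ∀ k : ℕ, diagonal D *ᵥ X k = (μ + 2 * k) • X k := by
    intro k
    induction k with
    | zero => simpa [X] using hx
    | succ k ih =>
      have h1 : diagonal D * E = E * diagonal D + (2 : ℝ) • E := by rw [← hHE]; abel
      rw [hX, mulVec_mulVec, h1, add_mulVec, ← mulVec_mulVec, ih, mulVec_smul, smul_mulVec,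
        ← add_smul]
      congr 1
      push_cast
      ring
  have h1 : F * E = E * F - diagonal D := by rw [← hEF]; abel
  have hF : ∀ k : ℕ, F *ᵥ X (k + 1) = (-((k + 1) * (μ + k))) • X k := by
    intro k
    rw [hX, mulVec_mulVec, h1, sub_mulVec, hH, ← mulVec_mulVec]
    induction k with
    | zero =>
      have : X 0 = x := rfl
      rw [this, hFx]
      simp
    | succ k ih =>
      have h2 : F *ᵥ X (k + 1) = (-((k + 1) * (μ + k))) • X k := by
        rw [← ih, hX, mulVec_mulVec, h1, sub_mulVec, hH, ← mulVec_mulVec]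
      rw [h2, mulVec_smul, ← hX, ← sub_smul]
      congr 1
      push_cast
      ring
  have hX0 : ∀ k, X k ≠ 0 := by
    intro k
    induction k with
    | zero => exact hne
    | succ k ih =>
      intro h0
      have h2 := hF k
      rw [h0, mulVec_zero, eq_comm, smul_eq_zero] at h2
      refine h2.elim (fun h3 => ?_) ih
      have : 0 < ((k : ℝ) + 1) * (μ + k) := by positivity
      linarith
  have ha : ∀ k : ℕ, ∃ a, D a = μ + 2 * k := by
    intro k
    obtain ⟨a, ha⟩ := Function.ne_iff.1 (hX0 k)
    refine ⟨a, ?_⟩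
    have h2 := congrFun (hH k) a
    rw [mulVec_diagonal, Pi.smul_apply, smul_eq_mul] at h2
    exact mul_right_cancel₀ ha h2
  choose a ha using ha
  refine not_injective_infinite_finite a fun k l h => ?_
  have h2 := ha k
  rw [h, ha l] at h2
  have h3 : (l : ℝ) = k := by linarith
  exact_mod_cast h3.symm

open Matrix in
/-- For an `𝔰𝔩₂`-triple of matrices `(H, E, F)` with `H` diagonal and `0 < k`, the multiplicity of
the eigenvalue `2 (k + 1)` of `H` is at most that of the eigenvalue `2 k`. -/
lemma card_le_of_sl2 (hEF : E * F - F * E = diagonal D)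
    (hHE : diagonal D * E - E * diagonal D = (2 : ℝ) • E)
    (hHF : diagonal D * F - F * diagonal D = (-2 : ℝ) • F) {k : ℝ} (hk : 0 < k) :
    Nat.card {a // D a = 2 * (k + 1)} ≤ Nat.card {a // D a = 2 * k} := by
  let ext : ({a // D a = 2 * (k + 1)} → ℝ) →ₗ[ℝ] (n → ℝ) :=
    { toFun := fun v a => if h : D a = 2 * (k + 1) then v ⟨a, h⟩ else 0
      map_add' := fun v w => by ext a; by_cases h : D a = 2 * (k + 1) <;> simp [h]
      map_smul' := fun t v => by ext a; by_cases h : D a = 2 * (k + 1) <;> simp [h] }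
  let T : ({a // D a = 2 * (k + 1)} → ℝ) →ₗ[ℝ] ({a // D a = 2 * k} → ℝ) :=
    LinearMap.funLeft ℝ ℝ Subtype.val ∘ₗ F.mulVecLin ∘ₗ ext
  have hext : ∀ v, diagonal D *ᵥ ext v = (2 * (k + 1)) • ext v := by
    intro v
    ext a
    rw [mulVec_diagonal, Pi.smul_apply, smul_eq_mul]
    by_cases h : D a = 2 * (k + 1)
    · rw [h]
    · simp [ext, h]
  have hT : Function.Injective T := by
    rw [← LinearMap.ker_eq_bot, LinearMap.ker_eq_bot']
    intro v hv
    have h0 : F *ᵥ ext v = 0 := by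
      -- `F` lowers the eigenvalue by two, so `F *ᵥ ext v` is supported on the entries `D a = 2 k`
      have h1 : diagonal D * F = F * diagonal D + (-2 : ℝ) • F := by rw [← hHF]; abel
      have h2 : diagonal D *ᵥ (F *ᵥ ext v) = (2 * k) • (F *ᵥ ext v) := by
        rw [mulVec_mulVec, h1, add_mulVec, ← mulVec_mulVec, hext, mulVec_smul, smul_mulVec,
          ← add_smul]
        congr 1
        ring
      ext a
      by_cases h : D a = 2 * k
      · exact congrFun hv ⟨a, h⟩
      · have h3 := congrFun h2 a
        rw [mulVec_diagonal, Pi.smul_apply, smul_eq_mul] at h3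
        by_contra h4
        exact h (mul_right_cancel₀ h4 h3)
    have h1 := eq_zero_of_lower_eq_zero hEF hHE (by positivity) (hext v) h0
    ext ⟨a, ha⟩
    have h2 := congrFun h1 a
    simpa [ext, ha] using h2
  have := LinearMap.finrank_le_finrank_of_injective hT
  simpa [Nat.card_eq_fintype_card] using this

end Matrix

open RootPairing RootPairing.GeckConstruction in
/-- In a reduced irreducible crystallographic root system with base `b` and height function `d`,
there are at most as many roots of height `k + 1` as of height `k`, for `0 < k`. The matrices
`∑ e_i`, `∑ c_i f_i`, `∑ c_i h_i` of Geck's construction form the principal `𝔰𝔩₂`-triple. -/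
lemma card_height_le {ι M N : Type*} [Fintype ι] [AddCommGroup M] [Module ℝ M] [AddCommGroup N]
    [Module ℝ N] (P : RootPairing ι ℝ M N) [P.IsRootSystem] [P.IsCrystallographic] [P.IsReduced]
    [P.IsIrreducible] (b : P.Base) (c : ι → ℝ) (d : ι → ℝ)
    (hd : ∀ j, ∑ i ∈ b.support, c i * P.pairing j i = 2 * d j) (hb : ∀ i ∈ b.support, d i = 1)
    {k : ℝ} (hk : 0 < k) : Nat.card {j // d j = k + 1} ≤ Nat.card {j // d j = k} := by
  let D : b.support ⊕ ι → ℝ := Sum.elim 0 fun j => 2 * d j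
  have hcast : ∀ i j, ((P.pairingIn ℤ i j : ℤ) : ℝ) = P.pairing i j := fun i j => by
    simpa using P.algebraMap_pairingIn ℤ i j
  have hd' : ∀ j, ∑ i : b.support, c i * P.pairing j i = 2 * d j := fun j => by
    rw [← hd j, Finset.sum_coe_sort b.support (fun i => c i * P.pairing j i)]
  have hH : ∑ i : b.support, c i • h i = Matrix.diagonal D := by
    simp only [h_eq_diagonal, ← Matrix.diagonal_smul]
    ext p q
    by_cases hpq : p = q
    · subst hpq
      rcases p with p | p
      · simp [Matrix.sum_apply, D]
      · simp [Matrix.sum_apply, D, ← hd', hcast]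
    · simp [Matrix.sum_apply, hpq]
  have hc : ∀ i : b.support, ∑ j : b.support, c j * (b.cartanMatrix i j : ℝ) = 2 := by
    intro i
    have := hd' i
    rw [hb i i.2, mul_one] at this
    rw [← this]
    refine Finset.sum_congr rfl fun j _ => ?_
    rw [← hcast]
    rfl
  have hHE : Matrix.diagonal D * (∑ i, e i) - (∑ i, e i) * Matrix.diagonal D
      = (2 : ℝ) • ∑ i : b.support, e i := by
    rw [← hH, Finset.sum_mul_sum, Finset.sum_mul_sum, Finset.sum_comm, ← Finset.sum_sub_distrib,
      Finset.smul_sum]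
    refine Finset.sum_congr rfl fun i _ => ?_
    rw [← Finset.sum_sub_distrib, ← hc i, Finset.sum_smul]
    refine Finset.sum_congr rfl fun j _ => ?_
    have h1 := lie_h_e i j
    rw [Ring.lie_def] at h1
    rw [smul_mul_assoc, mul_smul_comm, ← smul_sub, h1, mul_smul, Int.cast_smul_eq_zsmul]
  have hHF : Matrix.diagonal D * (∑ i : b.support, c i • f i) -
      (∑ i : b.support, c i • f i) * Matrix.diagonal D
      = (-2 : ℝ) • ∑ i : b.support, c i • f i := by
    rw [← hH, Finset.sum_mul_sum, Finset.sum_mul_sum, Finset.sum_comm, ← Finset.sum_sub_distrib,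
      Finset.smul_sum]
    refine Finset.sum_congr rfl fun i _ => ?_
    rw [← Finset.sum_sub_distrib, ← hc i, ← Finset.sum_neg_distrib, Finset.sum_smul]
    refine Finset.sum_congr rfl fun j _ => ?_
    have h1 := lie_h_f i j
    rw [Ring.lie_def] at h1
    rw [smul_mul_smul_comm, smul_mul_smul_comm, mul_comm (c i), ← smul_sub, h1, smul_smul,
      ← Int.cast_smul_eq_zsmul ℝ, smul_smul]
    congr 1
    push_cast
    ring
  have hEF : (∑ i : b.support, e i) * (∑ i : b.support, c i • f i) -
      (∑ i : b.support, c i • f i) * (∑ i : b.support, e i) = Matrix.diagonal D := by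
    rw [← hH, Finset.sum_mul_sum, Finset.sum_mul_sum, Finset.sum_comm, ← Finset.sum_sub_distrib]
    refine Finset.sum_congr rfl fun j _ => ?_
    rw [← Finset.sum_sub_distrib, Finset.sum_eq_single j]
    · have h1 := lie_e_f_same j
      rw [Ring.lie_def] at h1
      rw [smul_mul_assoc, mul_smul_comm, ← smul_sub, h1]
    · intro i _ hij
      have h1 := lie_e_f_ne hij
      rw [Ring.lie_def] at h1
      rw [smul_mul_assoc, mul_smul_comm, ← smul_sub, h1, smul_zero]
    · simp
  have key := card_le_of_sl2 hEF hHE hHF hk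
  have hcard : ∀ r : ℝ, 0 < r → Nat.card {a // D a = 2 * r} = Nat.card {j // d j = r} := by
    intro r hr
    let g : {j // d j = r} → {a // D a = 2 * r} := fun j => ⟨Sum.inr j.1, by simp [D, j.2]⟩
    refine (Nat.card_congr (Equiv.ofBijective g ⟨fun i j h => ?_, ?_⟩)).symm
    · exact Subtype.ext (Sum.inr_injective (congrArg Subtype.val h))
    · rintro ⟨a | j, h⟩
      · have h0 : (0 : ℝ) = 2 * r := h
        linarith
      · exact ⟨⟨j, by simpa [D] using h⟩, rfl⟩
  rwa [hcard _ (by positivity), hcard _ hk] at key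

section Pairing

variable {ℓ : ℕ} (rs : RootSystemData ℓ)

lemma copairing_apply (α x : Fin ℓ → ℝ) : rs.copairing α x = 2 * rs.B x α / rs.B α α := by
  simp only [copairing, LinearMap.smul_apply, LinearMap.flip_apply, smul_eq_mul]
  ring

lemma copairing_injOn {α β : Fin ℓ → ℝ} (hα : α ∈ rs.Δ) (hβ : β ∈ rs.Δ)
    (h : rs.copairing α = rs.copairing β) : α = β := by
  have hα' := rs.B_pos hα
  have hβ' := rs.B_pos hβ
  have h1 : (2 / rs.B α α) • α - (2 / rs.B β β) • β = 0 := by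
    by_contra hne
    refine (rs.posdef _ hne).ne' ?_
    have h2 := LinearMap.congr_fun h ((2 / rs.B α α) • α - (2 / rs.B β β) • β)
    simp only [copairing, LinearMap.smul_apply, LinearMap.flip_apply] at h2
    rw [map_sub, map_smul, map_smul, h2, sub_self]
  have h2 : (rs.B β β / rs.B α α) • α = β := by
    have h3 := congrArg (fun v => (rs.B β β / 2) • v) (sub_eq_zero.1 h1)
    simp only [smul_smul] at h3
    rw [show rs.B β β / 2 * (2 / rs.B β β) = 1 by field_simp,
      show rs.B β β / 2 * (2 / rs.B α α) = rs.B β β / rs.B α α by field_simp, one_smul] at h3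
    exact h3
  rcases rs.reduced α hα _ (h2.symm ▸ hβ) with h3 | h3
  · rw [← h2, h3, one_smul]
  · have : 0 < rs.B β β / rs.B α α := by positivity
    linarith

lemma span_roots : Submodule.span ℝ (Set.range fun α : rs.Δ => α.1) = ⊤ := by
  rw [eq_top_iff]
  intro x _
  rw [show x = ∑ i, x i • sr i from pi_eq_sum_univ' x]
  exact Submodule.sum_mem _ fun i _ =>
    Submodule.smul_mem _ _ (Submodule.subset_span ⟨⟨sr i, rs.simple_mem i⟩, rfl⟩)

/-- The root system as a `RootPairing` between the ambient space and its dual. -/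
def rootPairing : RootPairing rs.Δ ℝ (Fin ℓ → ℝ) (Module.Dual ℝ (Fin ℓ → ℝ)) :=
  RootPairing.mk'' (Module.Dual.eval ℝ (Fin ℓ → ℝ))
    ⟨fun α => α.1, Subtype.val_injective⟩
    ⟨fun α => rs.copairing α.1, fun α β h => Subtype.ext (rs.copairing_injOn α.2 β.2 h)⟩
    (fun α => by
      change rs.copairing α.1 α.1 = 2
      have := (rs.B_pos α.2).ne'
      rw [copairing_apply]
      field_simp)
    (fun α => by
      rintro _ ⟨β, rfl⟩
      refine ⟨⟨_, rs.reflect_mem β.1 β.2 α.1 α.2⟩, ?_⟩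
      rw [Module.preReflection_apply]
      change _ = β.1 - rs.copairing α.1 β.1 • α.1
      rw [copairing_apply]
      rfl)
    rs.span_roots

lemma rootPairing_root (α : rs.Δ) : rs.rootPairing.root α = α.1 := rfl

lemma rootPairing_coroot (α : rs.Δ) : rs.rootPairing.coroot α = rs.copairing α.1 := rfl

lemma rootPairing_pairing (α β : rs.Δ) :
    rs.rootPairing.pairing α β = rs.copairing β.1 α.1 := rfl

lemma exists_int (α β : rs.Δ) : ∃ z : ℤ, (z : ℝ) = rs.copairing β.1 α.1 := by
  obtain ⟨z, hz⟩ := rs.crystal α.1 α.2 β.1 β.2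
  exact ⟨z, by rw [copairing_apply, hz]⟩

instance : rs.rootPairing.IsRootSystem :=
  RootPairing.isRootSystem_mk'' fun α β => rs.exists_int α β

instance : rs.rootPairing.IsCrystallographic := ⟨fun α β => rs.exists_int α β⟩

instance : rs.rootPairing.IsReduced where
  eq_or_eq_neg α β h := by
    rw [LinearIndependent.pair_iff' (by exact rs.ne_zero_of_mem α.2)] at h
    push Not at h
    obtain ⟨a, ha⟩ := h
    simp only [rootPairing_root] at ha ⊢
    rcases rs.reduced α.1 α.2 a (ha.symm ▸ β.2) with h1 | h1
    · left
      rw [← ha, h1, one_smul]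
    · right
      rw [← ha, h1, neg_one_smul, neg_neg]

lemma isIrreducible_rootPairing [Nontrivial (Fin ℓ → ℝ)] (hirr : rs.IsIrreducible) :
    rs.rootPairing.IsIrreducible := by
  refine RootPairing.IsIrreducible.mk' _ fun q hq hne => ?_
  refine RootPairing.eq_top_of_mem_invtSubmodule_of_forall_eq_univ _ q hne hq
    fun Φ hΦ hΦq hker => ?_
  by_contra hcon
  obtain ⟨γ, hγ⟩ := (Set.ne_univ_iff_exists_notMem Φ).1 hcon
  obtain ⟨δ, hδ⟩ := hΦ
  obtain ⟨α, hα, β, hβ, hB⟩ := hirr (rs.Δ.filter fun α => ∃ h : α ∈ rs.Δ, ⟨α, h⟩ ∈ Φ)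
    (Finset.filter_subset _ _) ⟨δ.1, by simpa using hδ⟩ ⟨γ.1, by simpa using hγ⟩
  simp only [Finset.mem_filter, Finset.mem_sdiff] at hα hβ
  obtain ⟨hα, _, hαΦ⟩ := hα
  obtain ⟨hβ, hβΦ⟩ := hβ
  have h1 : α ∈ q := hΦq ⟨⟨α, hα⟩, hαΦ, rfl⟩
  have h2 : rs.copairing β α = 0 := hker ⟨β, hβ⟩ (fun h => hβΦ ⟨hβ, hβ, h⟩) h1
  rw [copairing_apply, div_eq_zero_iff] at h2
  have h3 := rs.B_pos hβ
  rcases h2 with h2 | h2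
  · exact hB (by linarith)
  · exact h3.ne' h2

/-- The simple roots as a base of the root pairing. -/
def base : rs.rootPairing.Base :=
  RootPairing.Base.mk' rs.rootPairing (Set.range fun i : Fin ℓ => (⟨sr i, rs.simple_mem i⟩ : rs.Δ))
    (by
      have hinj : Function.Injective fun i : Fin ℓ => (⟨sr i, rs.simple_mem i⟩ : rs.Δ) := by
        intro i j h
        by_contra hne
        have := congrFun (congrArg Subtype.val h) i
        simp [sr, hne] at this
      rw [linearIndepOn_range_iff hinj]
      exact Pi.linearIndependent_single_one (Fin ℓ) ℝ)
    (by
      have key : ∀ α ∈ rs.pos, α ∈ AddSubmonoid.closure (rs.rootPairing.root ''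
          Set.range fun i : Fin ℓ => (⟨sr i, rs.simple_mem i⟩ : rs.Δ)) := by
        intro α hα
        rw [mem_pos] at hα
        rw [show α = ∑ i, α i • sr i from pi_eq_sum_univ' α]
        refine sum_mem fun i _ => ?_
        obtain ⟨z, hz⟩ := rs.coords_int α hα.1 i
        have h0 : 0 ≤ z := by
          have := hα.2 i
          rw [hz] at this
          exact_mod_cast this
        lift z to ℕ using h0
        rw [hz, Int.cast_natCast, Nat.cast_smul_eq_nsmul]
        have hm : sr i ∈ rs.rootPairing.root ''
            Set.range fun i : Fin ℓ => (⟨sr i, rs.simple_mem i⟩ : rs.Δ) :=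
          ⟨⟨sr i, rs.simple_mem i⟩, ⟨i, rfl⟩, rfl⟩
        exact nsmul_mem (AddSubmonoid.subset_closure hm) z
      intro α
      exact (rs.mem_pos_or_neg α.2).imp (key _) (key _))

lemma mem_base_support {α : rs.Δ} : α ∈ rs.base.support ↔ ∃ i, sr i = α.1 := by
  simp [base, RootPairing.Base.mk', Subtype.ext_iff]

/-- A root of positive height is a positive root. -/
lemma card_roots_of_height {r : ℝ} (hr : 0 < r) :
    Nat.card {α : rs.Δ // htL ℓ α.1 = r} = (rs.pos.filter fun α => rs.ht α = r).card := by
  rw [← Nat.card_eq_finsetCard]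
  have hht : ∀ α, rs.ht α = htL ℓ α := fun α => (htL_apply α).symm
  let g : {α // α ∈ rs.pos.filter fun α => rs.ht α = r} → {α : rs.Δ // htL ℓ α.1 = r} := fun α =>
    have h := Finset.mem_filter.1 α.2
    ⟨⟨α.1, (rs.mem_pos.1 h.1).1⟩, (hht α.1).symm.trans h.2⟩
  refine (Nat.card_congr (Equiv.ofBijective g ⟨fun α β h => ?_, ?_⟩)).symm
  · exact Subtype.ext (congrArg (fun x => x.1.1) h)
  · rintro ⟨⟨α, hα⟩, h⟩
    refine ⟨⟨α, Finset.mem_filter.2 ⟨?_, by rw [hht]; exact h⟩⟩, rfl⟩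
    refine (rs.mem_pos_or_neg hα).resolve_right fun hneg => ?_
    have := rs.htL_pos hneg
    rw [map_neg] at this
    simp only at h
    linarith

/-- `ℓ_{k+1} ≤ ℓ_k` for `k > 0`. -/
theorem card_filter_ht_le (hirr : rs.IsIrreducible) {k : ℝ} (hk : 0 < k) :
    (rs.pos.filter fun α => rs.ht α = k + 1).card ≤ (rs.pos.filter fun α => rs.ht α = k).card := by
  rcases Nat.eq_zero_or_pos ℓ with rfl | hℓ
  · rw [Finset.card_eq_zero.2]
    · exact Nat.zero_le _
    · refine Finset.filter_eq_empty_iff.2 fun α hα _ => ?_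
      exact rs.ne_zero_of_mem (rs.mem_pos.1 hα).1 (Subsingleton.elim _ _)
  have : Nonempty (Fin ℓ) := ⟨⟨0, hℓ⟩⟩
  have := rs.isIrreducible_rootPairing hirr
  -- the principal semisimple element `2 ht` is a combination of the simple coroots
  have hmem : (2 : ℝ) • htL ℓ ∈ Submodule.span ℝ (rs.rootPairing.coroot '' rs.base.support) := by
    rw [rs.base.span_coroot_support]
    simp
  obtain ⟨c, hc⟩ := (Submodule.mem_span_image_finset_iff_exists_fun' ℝ).1 hmem
  rw [← rs.card_roots_of_height hk, ← rs.card_roots_of_height (by positivity)]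
  refine card_height_le rs.rootPairing rs.base c (fun α => htL ℓ α.1) (fun α => ?_) (fun α hα => ?_)
    hk
  · have := LinearMap.congr_fun hc α.1
    simpa [rootPairing_pairing, rootPairing_coroot] using this
  · obtain ⟨i, hi⟩ := rs.mem_base_support.1 hα
    rw [← hi, htL_sr]

end Pairing

/-! ### Grouping the positive roots by height -/

/-- The exponents telescope; the base of the exponent involving `ℓ` is `1`, so that only
`N (i + 1) ≤ N i` for `1 ≤ i` matters. -/
lemma prod_telescope (ℓ : ℕ) (N : ℕ → ℕ) (hN : ∀ i, 1 ≤ i → N (i + 1) ≤ N i) (m : ℕ) :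
    ((∏ i ∈ Finset.Icc 1 m, i ^ ((if i - 1 = 0 then ℓ else N (i - 1)) - N i)) * (m + 1) ^ N m) *
      ∏ i ∈ Finset.Icc 1 m, i ^ N i = ∏ i ∈ Finset.Icc 1 m, (i + 1) ^ N i := by
  induction m with
  | zero => simp
  | succ m ih =>
    rw [Finset.prod_Icc_succ_top (by omega), Finset.prod_Icc_succ_top (by omega),
      Finset.prod_Icc_succ_top (by omega), ← ih, Nat.add_sub_cancel]
    rcases Nat.eq_zero_or_pos m with rfl | hm
    · simp
    · rw [if_neg hm.ne', ← pow_sub_mul_pow (m + 1) (hN m hm)]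
      ring

lemma prod_pos_comp_ht {ℓ m : ℕ} (rs : RootSystemData ℓ)
    (hht : rs.pos.image rs.ht = (Finset.Icc 1 m).image (fun i : ℕ => (i : ℝ))) (g : ℝ → ℝ) :
    ∏ α ∈ rs.pos, g (htL ℓ α) =
      ∏ i ∈ Finset.Icc 1 m, g i ^ (rs.pos.filter fun α => rs.ht α = (i : ℝ)).card := by
  have h1 : ∏ α ∈ rs.pos, g (htL ℓ α) = ∏ α ∈ rs.pos, g (rs.ht α) :=
    Finset.prod_congr rfl fun α _ => by rw [htL_apply]; rfl
  rw [h1, Finset.prod_comp g rs.ht, hht, Finset.prod_image (fun _ _ _ _ h => Nat.cast_injective h)]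

end RootSystemData

/-- If the positive roots of an irreducible reduced crystallographic root
system of rank `ℓ` have exactly the heights `1, …, m`, and `ℓ_i` denotes the number of
positive roots of height `i` (with `ℓ_0 := ℓ`), then
`|W| = 1^{ℓ−ℓ_1} · 2^{ℓ_1−ℓ_2} ⋯ m^{ℓ_{m−1}−ℓ_m} · (m+1)^{ℓ_m}`. -/
theorem weyl_group_card {ℓ m : ℕ} (rs : RootSystemData ℓ) (hirr : rs.IsIrreducible)
    (hht : rs.pos.image rs.ht = (Finset.Icc 1 m).image (fun i : ℕ => (i : ℝ))) :
    Nat.card rs.weylGroup =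
      (∏ i ∈ Finset.Icc 1 m,
          i ^ ((if i - 1 = 0 then ℓ else
                  (rs.pos.filter fun α => rs.ht α = ((i - 1 : ℕ) : ℝ)).card)
              - (rs.pos.filter fun α => rs.ht α = (i : ℝ)).card))
        * (m + 1) ^ (rs.pos.filter fun α => rs.ht α = (m : ℝ)).card := by
  set N : ℕ → ℕ := fun i => (rs.pos.filter fun α => rs.ht α = (i : ℝ)).card with hNdef
  have hN : ∀ i, 1 ≤ i → N (i + 1) ≤ N i := by
    intro i hi
    have := rs.card_filter_ht_le hirr (k := i) (by exact_mod_cast hi)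
    simpa [hNdef] using this
  have h1 := rs.prod_ht_add_one
  rw [rs.prod_pos_comp_ht hht (fun x => x + 1), rs.prod_pos_comp_ht hht (fun x => x)] at h1
  have h2 := prod_telescope ℓ N hN m
  have h3 : ∏ i ∈ Finset.Icc 1 m, (i + 1) ^ N i =
      Nat.card rs.weylGroup * ∏ i ∈ Finset.Icc 1 m, i ^ N i := by
    exact_mod_cast h1
  have h4 : 0 < ∏ i ∈ Finset.Icc 1 m, i ^ N i :=
    Finset.prod_pos fun i hi => pow_pos (Finset.mem_Icc.1 hi).1 _
  exact Nat.eq_of_mul_eq_mul_right h4 (h3.symm.trans h2.symm)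
end
end

section
/- The indicial equations of the full Kostant–Toda lattice on so₅(ℂ), namely the algebraic system in the unknowns (a₂₀, a₁₀, b₂₀, b₁₀, c₁₀, d₁₀) ∈ ℂ⁶: −a₂₀ = b₂₀, −a₁₀ = b₁₀, −2b₂₀ = 2(a₁₀ − a₂₀)b₂₀ + 2c₁₀, −2b₁₀ = (a₂₀ − 2a₁₀)b₁₀ − c₁₀, −3c₁₀ = −a₂₀c₁₀ + 2d₁₀, −4d₁₀ = −2a₁₀d₁₀, has exactly 8 solutions (8 = |W(B₂)|, the order of the Weyl group of type B₂), namely (a₂₀, a₁₀, b₂₀, b₁₀, c₁₀, d₁₀) ∈ { (0,0,0,0,0,0), (0,1,0,−1,0,0), (1,0,−1,0,0,0), (1,2,−1,−2,2,−2), (3,1,−3,−1,−3,0), (3,3,−3,−3,3,0), (4,2,−4,−2,−4,−2), (4,3,−4,−3,0,0) }. In particular all solutions have nonnegative integer values of (a₂₀, a₁₀). -/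
/-!
Write `x = a₂₀`, `y = a₁₀`. The first three equations and the fifth determine `b₂₀ = -x`,
`b₁₀ = -y`, `c₁₀ = x (1 + y - x)` and `2 d₁₀ = (x - 3) c₁₀`. The remaining two become the conic
`x² - 2xy + 2y² - x - 2y = 0` and `(y - 2) (x - 3) x (1 + y - x) = 0`. Thus the solutions are the
intersections of a conic with the four lines `y = 2`, `x = 3`, `x = 0`, `x = y + 1`; each line
meets the conic in two points, and the eight points are distinct.
-/

/-- The intersection of the conic with the four lines. -/
lemma so5_conic_inter_lines {x y : ℂ} (hC : x ^ 2 - 2 * x * y + 2 * y ^ 2 - x - 2 * y = 0)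
    (hL : (y - 2) * ((x - 3) * (x * (1 + y - x))) = 0) :
    (x = 0 ∧ y = 0) ∨ (x = 0 ∧ y = 1) ∨ (x = 1 ∧ y = 0) ∨ (x = 1 ∧ y = 2) ∨
      (x = 3 ∧ y = 1) ∨ (x = 3 ∧ y = 3) ∨ (x = 4 ∧ y = 2) ∨ (x = 4 ∧ y = 3) := by
  rcases mul_eq_zero.1 hL with h | h
  · obtain rfl : y = 2 := by linear_combination h
    have h2 : (x - 1) * (x - 4) = 0 := by linear_combination hC
    rcases mul_eq_zero.1 h2 with h | h <;> have := sub_eq_zero.1 h <;> simp [this]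
  rcases mul_eq_zero.1 h with h | h
  · obtain rfl : x = 3 := by linear_combination h
    have h2 : (y - 1) * (y - 3) = 0 := by linear_combination hC / 2
    rcases mul_eq_zero.1 h2 with h | h <;> have := sub_eq_zero.1 h <;> simp [this]
  rcases mul_eq_zero.1 h with rfl | h
  · have h2 : y * (y - 1) = 0 := by linear_combination hC / 2
    rcases mul_eq_zero.1 h2 with h | h
    · simp [h]
    · simp [sub_eq_zero.1 h]
  · obtain rfl : x = 1 + y := by linear_combination -h
    have h2 : y * (y - 3) = 0 := by linear_combination hC
    rcases mul_eq_zero.1 h2 with h | h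
    · simp [h]
    · have := sub_eq_zero.1 h
      subst this
      norm_num

/-- The explicit description of the solution set. -/
lemma so5_indicial_iff :
    ∀ a₂₀ a₁₀ b₂₀ b₁₀ c₁₀ d₁₀ : ℂ,
      (-a₂₀ = b₂₀ ∧ -a₁₀ = b₁₀ ∧
        -2 * b₂₀ = 2 * (a₁₀ - a₂₀) * b₂₀ + 2 * c₁₀ ∧
        -2 * b₁₀ = (a₂₀ - 2 * a₁₀) * b₁₀ - c₁₀ ∧
        -3 * c₁₀ = -a₂₀ * c₁₀ + 2 * d₁₀ ∧
        -4 * d₁₀ = -2 * a₁₀ * d₁₀)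
      ↔ ((a₂₀, a₁₀, b₂₀, b₁₀, c₁₀, d₁₀) = ((0 : ℂ), (0 : ℂ), (0 : ℂ), (0 : ℂ), (0 : ℂ), (0 : ℂ)) ∨
          (a₂₀, a₁₀, b₂₀, b₁₀, c₁₀, d₁₀) = (0, 1, 0, -1, 0, 0) ∨
          (a₂₀, a₁₀, b₂₀, b₁₀, c₁₀, d₁₀) = (1, 0, -1, 0, 0, 0) ∨
          (a₂₀, a₁₀, b₂₀, b₁₀, c₁₀, d₁₀) = (1, 2, -1, -2, 2, -2) ∨
          (a₂₀, a₁₀, b₂₀, b₁₀, c₁₀, d₁₀) = (3, 1, -3, -1, -3, 0) ∨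
          (a₂₀, a₁₀, b₂₀, b₁₀, c₁₀, d₁₀) = (3, 3, -3, -3, 3, 0) ∨
          (a₂₀, a₁₀, b₂₀, b₁₀, c₁₀, d₁₀) = (4, 2, -4, -2, -4, -2) ∨
          (a₂₀, a₁₀, b₂₀, b₁₀, c₁₀, d₁₀) = (4, 3, -4, -3, 0, 0)) := by
  intro x y b₂ b₁ c d
  simp only [Prod.mk.injEq]
  constructor
  · rintro ⟨rfl, rfl, h3, h4, h5, h6⟩
    obtain rfl : c = x * (1 + y - x) := by linear_combination -h3 / 2
    obtain rfl : d = (x - 3) * (x * (1 + y - x)) / 2 := by linear_combination -h5 / 2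
    have hC : x ^ 2 - 2 * x * y + 2 * y ^ 2 - x - 2 * y = 0 := by linear_combination -h4
    have hL : (y - 2) * ((x - 3) * (x * (1 + y - x))) = 0 := by linear_combination h6
    rcases so5_conic_inter_lines hC hL with h | h | h | h | h | h | h | h <;>
      obtain ⟨rfl, rfl⟩ := h <;> norm_num
  · rintro (h | h | h | h | h | h | h | h) <;>
      obtain ⟨rfl, rfl, rfl, rfl, rfl, rfl⟩ := h <;> norm_num

/-- The indicial equations of the full Kostant–Toda lattice on `so₅(ℂ)`
have exactly `8 = |W(B₂)|` solutions, namely the eight explicitly listed tuples; in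
particular all solutions have nonnegative integer values of `(a₂₀, a₁₀)`. -/
theorem so5_indicial_solutions :
    (∀ a₂₀ a₁₀ b₂₀ b₁₀ c₁₀ d₁₀ : ℂ,
      (-a₂₀ = b₂₀ ∧ -a₁₀ = b₁₀ ∧
        -2 * b₂₀ = 2 * (a₁₀ - a₂₀) * b₂₀ + 2 * c₁₀ ∧
        -2 * b₁₀ = (a₂₀ - 2 * a₁₀) * b₁₀ - c₁₀ ∧
        -3 * c₁₀ = -a₂₀ * c₁₀ + 2 * d₁₀ ∧
        -4 * d₁₀ = -2 * a₁₀ * d₁₀)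
      ↔ ((a₂₀, a₁₀, b₂₀, b₁₀, c₁₀, d₁₀) = ((0 : ℂ), (0 : ℂ), (0 : ℂ), (0 : ℂ), (0 : ℂ), (0 : ℂ)) ∨
          (a₂₀, a₁₀, b₂₀, b₁₀, c₁₀, d₁₀) = (0, 1, 0, -1, 0, 0) ∨
          (a₂₀, a₁₀, b₂₀, b₁₀, c₁₀, d₁₀) = (1, 0, -1, 0, 0, 0) ∨
          (a₂₀, a₁₀, b₂₀, b₁₀, c₁₀, d₁₀) = (1, 2, -1, -2, 2, -2) ∨
          (a₂₀, a₁₀, b₂₀, b₁₀, c₁₀, d₁₀) = (3, 1, -3, -1, -3, 0) ∨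
          (a₂₀, a₁₀, b₂₀, b₁₀, c₁₀, d₁₀) = (3, 3, -3, -3, 3, 0) ∨
          (a₂₀, a₁₀, b₂₀, b₁₀, c₁₀, d₁₀) = (4, 2, -4, -2, -4, -2) ∨
          (a₂₀, a₁₀, b₂₀, b₁₀, c₁₀, d₁₀) = (4, 3, -4, -3, 0, 0)))
    ∧ Set.ncard {p : ℂ × ℂ × ℂ × ℂ × ℂ × ℂ |
        -p.1 = p.2.2.1 ∧ -p.2.1 = p.2.2.2.1 ∧
        -2 * p.2.2.1 = 2 * (p.2.1 - p.1) * p.2.2.1 + 2 * p.2.2.2.2.1 ∧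
        -2 * p.2.2.2.1 = (p.1 - 2 * p.2.1) * p.2.2.2.1 - p.2.2.2.2.1 ∧
        -3 * p.2.2.2.2.1 = -p.1 * p.2.2.2.2.1 + 2 * p.2.2.2.2.2 ∧
        -4 * p.2.2.2.2.2 = -2 * p.2.1 * p.2.2.2.2.2} = 8 := by
  refine ⟨so5_indicial_iff, ?_⟩
  have hset : {p : ℂ × ℂ × ℂ × ℂ × ℂ × ℂ |
        -p.1 = p.2.2.1 ∧ -p.2.1 = p.2.2.2.1 ∧
        -2 * p.2.2.1 = 2 * (p.2.1 - p.1) * p.2.2.1 + 2 * p.2.2.2.2.1 ∧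
        -2 * p.2.2.2.1 = (p.1 - 2 * p.2.1) * p.2.2.2.1 - p.2.2.2.2.1 ∧
        -3 * p.2.2.2.2.1 = -p.1 * p.2.2.2.2.1 + 2 * p.2.2.2.2.2 ∧
        -4 * p.2.2.2.2.2 = -2 * p.2.1 * p.2.2.2.2.2} =
      {(0, 0, 0, 0, 0, 0), (0, 1, 0, -1, 0, 0), (1, 0, -1, 0, 0, 0), (1, 2, -1, -2, 2, -2),
        (3, 1, -3, -1, -3, 0), (3, 3, -3, -3, 3, 0), (4, 2, -4, -2, -4, -2),
        (4, 3, -4, -3, 0, 0)} := by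
    ext ⟨x, y, b₂, b₁, c, d⟩
    exact so5_indicial_iff x y b₂ b₁ c d
  rw [hset]
  -- Distinctness is already visible in the first two coordinates.
  repeat rw [Set.ncard_insert_of_notMem
    (by simp only [Set.mem_insert_iff, Set.mem_singleton_iff, Prod.mk.injEq]; norm_num)]
  rw [Set.ncard_singleton]
end

section
/- Let (a₂₀, a₁₀, b₂₀, b₁₀, c₁₀, d₁₀) ∈ ℂ⁶ satisfy the indicial equations of the so₅(ℂ) full Kostant–Toda lattice: −a₂₀ = b₂₀, −a₁₀ = b₁₀, −2b₂₀ = 2(a₁₀ − a₂₀)b₂₀ + 2c₁₀, −2b₁₀ = (a₂₀ − 2a₁₀)b₁₀ − c₁₀, −3c₁₀ = −a₂₀c₁₀ + 2d₁₀, −4d₁₀ = −2a₁₀d₁₀. Let kI − K be the 6×6 matrix (in the variable k, with rows and columns ordered by (a₂, a₁, b₂, b₁, c₁, d₁)): row 1 = (k−1, 0, −1, 0, 0, 0); row 2 = (0, k−1, 0, −1, 0, 0); row 3 = (2b₂₀, −2b₂₀, k−2−2a₁₀+2a₂₀, 0, −2, 0); row 4 = (−b₁₀, 2b₁₀, 0,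 k−2−a₂₀+2a₁₀, 1, 0); row 5 = (c₁₀, 0, 0, 0, k−3+a₂₀, −2); row 6 = (0, 2d₁₀, 0, 0, 0, k−4+2a₁₀). Then, as polynomials in k, det(kI − K) = (k−2)(k−4)(k−1+2a₂₀−2a₁₀)(k−1−a₂₀+2a₁₀)(k−2+a₂₀)(k−3+2a₁₀). -/
/-!
The indicial equations have only finitely many solutions, and the factorization is checked at each
of them. The first three equations express `b₂₀`, `b₁₀`, `c₁₀` through `(a₂₀, a₁₀) = (x, y)`, and
the fifth gives `d₁₀ = (x - 3) c₁₀ / 2`, with `c₁₀ = x (1 + y - x)`. The last one then reads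
`x (1 + y - x) (x - 3) (y - 2) = 0`, and on each of the four lines so obtained the fourth equation,
which is a conic in `(x, y)`, leaves two points: eight in all (`indicial_points`). At each point
both sides of the claim, the left one expanded by `det_kowalevski_pattern`, are explicit polynomials
in `k` with integer coefficients.
-/

/-- The `(a₂₀, a₁₀)`-coordinates of the solutions of the indicial equations, once the other four
unknowns have been eliminated: `hc` is the fourth equation and `hd` the sixth. -/
lemma indicial_points (x y : ℂ) (hc : x * (1 + y - x) = -2 * y - (x - 2 * y) * y)
    (hd : x * (1 + y - x) * (x - 3) * (y - 2) = 0) :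
    (x = 0 ∧ y = 0) ∨ (x = 0 ∧ y = 1) ∨ (x = 1 ∧ y = 0) ∨ (x = 4 ∧ y = 3) ∨
      (x = 3 ∧ y = 1) ∨ (x = 3 ∧ y = 3) ∨ (x = 1 ∧ y = 2) ∨ (x = 4 ∧ y = 2) := by
  rcases mul_eq_zero.mp hd with h | hy
  · rcases mul_eq_zero.mp h with h | hx
    · rcases mul_eq_zero.mp h with hx | hxy
      · subst hx
        have : y * (y - 1) = 0 := by linear_combination -hc / 2
        rcases mul_eq_zero.mp this with h | h <;> grind
      · obtain rfl : x = 1 + y := by linear_combination -hxy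
        have : y * (y - 3) = 0 := by linear_combination -hc
        rcases mul_eq_zero.mp this with h | h <;> grind
    · obtain rfl : x = 3 := by linear_combination hx
      have : (y - 1) * (y - 3) = 0 := by linear_combination -hc / 2
      rcases mul_eq_zero.mp this with h | h <;> grind
  · obtain rfl : y = 2 := by linear_combination hy
    have : (x - 1) * (x - 4) = 0 := by linear_combination -hc
    rcases mul_eq_zero.mp this with h | h <;> grind

/-- The determinant of a matrix with the sparsity pattern of `kI - K`. The first two rows eliminate
the third and fourth unknowns, which leaves a `4 × 4` determinant, expanded here along its last
column. -/
lemma det_kowalevski_pattern (m p q r s b e c d : ℂ) :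
    Matrix.det
      !![m, 0, -1, 0, 0, 0;
         0, m, 0, -1, 0, 0;
         2 * b, -2 * b, p, 0, -2, 0;
         -e, 2 * e, 0, q, 1, 0;
         c, 0, 0, 0, r, -2;
         0, 2 * d, 0, 0, 0, s]
    = s * ((2 * b + m * p) * (2 * e + m * q) * r - 2 * b * e * r - 2 * b * c
          + 2 * (2 * e + m * q) * c) - 4 * d * (2 * b + m * p - 2 * e) := by
  simp [Matrix.det_succ_row_zero, Fin.sum_univ_succ, Fin.succAbove]
  ring

/-- At any solution of the indicial equations of the `so₅(ℂ)` full
Kostant–Toda lattice, the characteristic determinant of the Kowalevski matrix factors as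
`det(kI − K) = (k−2)(k−4)(k−1+2a₂₀−2a₁₀)(k−1−a₂₀+2a₁₀)(k−2+a₂₀)(k−3+2a₁₀)`. -/
theorem so5_kowalevski_det (a₂₀ a₁₀ b₂₀ b₁₀ c₁₀ d₁₀ : ℂ)
    (h1 : -a₂₀ = b₂₀) (h2 : -a₁₀ = b₁₀)
    (h3 : -2 * b₂₀ = 2 * (a₁₀ - a₂₀) * b₂₀ + 2 * c₁₀)
    (h4 : -2 * b₁₀ = (a₂₀ - 2 * a₁₀) * b₁₀ - c₁₀)
    (h5 : -3 * c₁₀ = -a₂₀ * c₁₀ + 2 * d₁₀)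
    (h6 : -4 * d₁₀ = -2 * a₁₀ * d₁₀) :
    ∀ k : ℂ,
      Matrix.det
        !![k - 1, 0, -1, 0, 0, 0;
           0, k - 1, 0, -1, 0, 0;
           2 * b₂₀, -2 * b₂₀, k - 2 - 2 * a₁₀ + 2 * a₂₀, 0, -2, 0;
           -b₁₀, 2 * b₁₀, 0, k - 2 - a₂₀ + 2 * a₁₀, 1, 0;
           c₁₀, 0, 0, 0, k - 3 + a₂₀, -2;
           0, 2 * d₁₀, 0, 0, 0, k - 4 + 2 * a₁₀]
      = (k - 2) * (k - 4) * (k - 1 + 2 * a₂₀ - 2 * a₁₀) * (k - 1 - a₂₀ + 2 * a₁₀)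
          * (k - 2 + a₂₀) * (k - 3 + 2 * a₁₀) := by
  intro k
  rw [det_kowalevski_pattern]
  subst h1 h2
  obtain rfl : c₁₀ = a₂₀ * (1 + a₁₀ - a₂₀) := by linear_combination -h3 / 2
  obtain rfl : d₁₀ = (a₂₀ - 3) * (a₂₀ * (1 + a₁₀ - a₂₀)) / 2 := by linear_combination -h5 / 2
  have points := indicial_points a₂₀ a₁₀ (by linear_combination h4) (by linear_combination h6)
  rcases points with ⟨rfl, rfl⟩ | ⟨rfl, rfl⟩ | ⟨rfl, rfl⟩ | ⟨rfl, rfl⟩ | ⟨rfl, rfl⟩ | ⟨rfl, rfl⟩ |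
    ⟨rfl, rfl⟩ | ⟨rfl, rfl⟩ <;>
    ring
end

section
/- Let (a₂, a₁, b₂, b₁, c₁, d₁) be a solution of the so₅(ℂ) full Kostant–Toda system a₂' = b₂, a₁' = b₁, b₂' = 2(a₁ − a₂)b₂ + 2c₁, b₁' = (a₂ − 2a₁)b₁ − c₁, c₁' = −a₂c₁ + 2d₁, d₁' = −2a₁d₁, holomorphic on a punctured disc around 0 with every component meromorphic at 0. If the leading Laurent data is that of the longest Weyl group element, i.e., a₂(t) − 4/t and a₁(t) − 3/t are holomorphic at 0, then c₁ ≡ 0 and d₁ ≡ 0 on a neighborhood of 0; that is, only solutions of the tridiagonal Kostant–Toda lattice can reach the smallest-dimensional Bruhat cell. -/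
/-!
With `a₂ = 4/z + g₂` and `a₁ = 3/z + g₁`, the equations for `d₁` and `c₁` say that
`(z⁶ d₁)' = -2 g₁ · z⁶ d₁` and, once `d₁ = 0`, that `(z⁴ c₁)' = -g₂ · z⁴ c₁`. So `d₁` and then
`c₁` either vanish or have a pole of order exactly `6`, respectively `4`. On the other hand the
equations for `a₂` and `b₂` express `c₁` through `g₁`, `g₂`: the terms of order `z⁻³` cancel
because the leading coefficients satisfy `4 - 3 = 1`, leaving `z² c₁` holomorphic at `0`. The equation
for `c₁` then gives `d₁` a pole of order at most `3`. Both poles are too small, so `d₁ = 0` and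
`c₁ = 0`. The vanishing is `eq_zero_of_hasDerivAt_mul_of_tendsto_zero`.
-/

open Filter Topology Metric Set

/-- A solution of `h' = p h` on a punctured disc, with `p` holomorphic on the full disc, vanishes
if it tends to `0` at the centre: `h` times the exponential of a primitive of `-p` is constant
along each ray. -/
lemma eq_zero_of_hasDerivAt_mul_of_tendsto_zero {h p : ℂ → ℂ} {ε : ℝ}
    (hp : DifferentiableOn ℂ p (ball 0 ε))
    (hh : ∀ z : ℂ, z ≠ 0 → ‖z‖ < ε → HasDerivAt h (p z * h z) z)
    (h0 : Tendsto h (𝓝[≠] 0) (𝓝 0)) :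
    ∀ z : ℂ, z ≠ 0 → ‖z‖ < ε → h z = 0 := by
  intro z hz hzε
  obtain ⟨P, hP⟩ := hp.isExactOn_ball
  have hε : 0 < ε := (norm_nonneg z).trans_lt hzε
  -- The value at `0` is overwritten, since nothing is known about `h 0`.
  set F : ℂ → ℂ := Function.update (fun w => h w * Complex.exp (-P w)) 0 0 with hF
  have hFd : ∀ w : ℂ, w ≠ 0 → ‖w‖ < ε → HasDerivAt F 0 w := by
    intro w hw hwε
    have h1 := (hh w hw hwε).mul (hP w (by simpa using hwε)).neg.cexp
    have h2 : HasDerivAt (fun w => h w * Complex.exp (-P w)) 0 w :=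
      h1.congr_deriv (by ring)
    refine h2.congr_of_eventuallyEq ?_
    filter_upwards [isOpen_ne.mem_nhds hw] with u hu
    exact Function.update_of_ne hu _ _
  have hF0 : ContinuousAt F 0 := by
    rw [hF, continuousAt_update_same]
    have hPc : ContinuousAt P 0 := (hP 0 (by simpa using hε)).continuousAt
    have := h0.mul (hPc.neg.cexp.tendsto.mono_left (nhdsWithin_le_nhds (s := {0}ᶜ)))
    simpa using this
  have hsub : ∀ s ∈ Icc (0 : ℝ) 1, ‖((1 - s : ℝ) : ℂ) * z‖ < ε := by
    intro s hs
    rw [norm_mul, Complex.norm_real, Real.norm_of_nonneg (by linarith [hs.2])]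
    nlinarith [hs.1, norm_nonneg z]
  -- The ray is run from `z` towards `0`, so that only the endpoint `s = 1` lacks a derivative.
  have hconst := constant_of_has_deriv_right_zero (f := fun s : ℝ => F (((1 - s : ℝ) : ℂ) * z))
    (a := 0) (b := 1) ?_ ?_ 1 (by simp)
  · have hz0 : F z = 0 := by simpa [hF] using hconst.symm
    simpa [hF, Function.update_of_ne hz] using hz0
  · intro s hs
    refine ContinuousAt.continuousWithinAt ?_
    have hFc : ContinuousAt F (((1 - s : ℝ) : ℂ) * z) := by
      by_cases hw : ((1 - s : ℝ) : ℂ) * z = 0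
      · rwa [hw]
      · exact (hFd _ hw (hsub s hs)).continuousAt
    exact ContinuousAt.comp' (f := fun s : ℝ => ((1 - s : ℝ) : ℂ) * z) hFc
      (by fun_prop)
  · intro s hs
    have hw : ((1 - s : ℝ) : ℂ) * z ≠ 0 :=
      mul_ne_zero (Complex.ofReal_ne_zero.2 (by linarith [hs.2])) hz
    have h1 : HasDerivAt (fun s : ℝ => ((1 - s : ℝ) : ℂ) * z) (((-1 : ℝ) : ℂ) * z) s :=
      (((hasDerivAt_id s).const_sub 1).ofReal_comp).mul_const z
    have h2 := (hFd _ hw (hsub s ⟨hs.1, hs.2.le⟩)).comp s h1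
    exact (h2.congr_deriv (by simp)).hasDerivWithinAt

/-- Let `(a₂, a₁, b₂, b₁, c₁, d₁)` be a solution of the `so₅(ℂ)` full
Kostant–Toda system, holomorphic on a punctured disc around `0` with every component
meromorphic at `0`.  If the leading Laurent data is that of the longest Weyl group element,
i.e. `a₂(t) − 4/t` and `a₁(t) − 3/t` extend holomorphically to `0`, then `c₁ ≡ 0` and
`d₁ ≡ 0` on a punctured neighborhood of `0`: only solutions of the tridiagonal
Kostant–Toda lattice reach the smallest-dimensional Bruhat cell. -/
theorem so5_fKT_longest_cell_tridiagonal (a₂ a₁ b₂ b₁ c₁ d₁ : ℂ → ℂ) (r : ℝ) (hr : 0 < r)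
    (hode : ∀ z : ℂ, z ≠ 0 → ‖z‖ < r →
      HasDerivAt a₂ (b₂ z) z ∧ HasDerivAt a₁ (b₁ z) z ∧
      HasDerivAt b₂ (2 * (a₁ z - a₂ z) * b₂ z + 2 * c₁ z) z ∧
      HasDerivAt b₁ ((a₂ z - 2 * a₁ z) * b₁ z - c₁ z) z ∧
      HasDerivAt c₁ (-(a₂ z) * c₁ z + 2 * d₁ z) z ∧
      HasDerivAt d₁ (-(2 * a₁ z) * d₁ z) z)
    (ha₂ : MeromorphicAt a₂ 0) (ha₁ : MeromorphicAt a₁ 0)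
    (hb₂ : MeromorphicAt b₂ 0) (hb₁ : MeromorphicAt b₁ 0)
    (hc₁ : MeromorphicAt c₁ 0) (hd₁ : MeromorphicAt d₁ 0)
    (hlead₂ : ∃ g : ℂ → ℂ, AnalyticAt ℂ g 0 ∧
      ∀ z : ℂ, z ≠ 0 → ‖z‖ < r → a₂ z - 4 / z = g z)
    (hlead₁ : ∃ g : ℂ → ℂ, AnalyticAt ℂ g 0 ∧
      ∀ z : ℂ, z ≠ 0 → ‖z‖ < r → a₁ z - 3 / z = g z) :
    ∃ ε > 0, ∀ z : ℂ, z ≠ 0 → ‖z‖ < ε → c₁ z = 0 ∧ d₁ z = 0 := by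
  obtain ⟨g₂, hg₂, ha₂g⟩ := hlead₂
  obtain ⟨g₁, hg₁, ha₁g⟩ := hlead₁
  obtain ⟨ε₀, hε₀, hball⟩ := Metric.eventually_nhds_iff_ball.1
    (hg₂.eventually_analyticAt.and hg₁.eventually_analyticAt)
  set ε := min ε₀ r with hε
  have hεpos : 0 < ε := lt_min hε₀ hr
  have hg₂' : ∀ z : ℂ, ‖z‖ < ε → AnalyticAt ℂ g₂ z := fun z hz =>
    (hball z (by simpa using hz.trans_le (min_le_left _ _))).1
  have hg₁' : ∀ z : ℂ, ‖z‖ < ε → AnalyticAt ℂ g₁ z := fun z hz =>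
    (hball z (by simpa using hz.trans_le (min_le_left _ _))).2
  have hode' := fun z hz (hzε : ‖z‖ < ε) => hode z hz (hzε.trans_le (min_le_right _ _))
  have ha₂e : ∀ z : ℂ, z ≠ 0 → ‖z‖ < ε → a₂ z = 4 * z⁻¹ + g₂ z := fun z hz hzε => by
    rw [← ha₂g z hz (hzε.trans_le (min_le_right _ _))]; ring
  have ha₁e : ∀ z : ℂ, z ≠ 0 → ‖z‖ < ε → a₁ z = 3 * z⁻¹ + g₁ z := fun z hz hzε => by
    rw [← ha₁g z hz (hzε.trans_le (min_le_right _ _))]; ring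
  have hnhds : ∀ z : ℂ, z ≠ 0 → ‖z‖ < ε → ∀ᶠ w in 𝓝 z, w ≠ 0 ∧ ‖w‖ < ε := fun z hz hzε =>
    (eventually_ne_nhds hz).and (continuous_norm.continuousAt.eventually_lt_const hzε)
  have hb₂e : ∀ z : ℂ, z ≠ 0 → ‖z‖ < ε → b₂ z = -4 * (z⁻¹) ^ 2 + deriv g₂ z := by
    intro z hz hzε
    have h1 := ((hasDerivAt_inv hz).const_mul 4).add (hg₂' z hzε).differentiableAt.hasDerivAt
    have h2 := h1.congr_of_eventuallyEq ((hnhds z hz hzε).mono fun w hw => ha₂e w hw.1 hw.2)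
    rw [(hode' z hz hzε).1.unique h2]
    field_simp
  have hsq : ∀ z : ℂ, z ≠ 0 → HasDerivAt (fun w : ℂ => w⁻¹ ^ 2) (-2 * z⁻¹ ^ 3) z := by
    intro z hz
    refine ((hasDerivAt_inv hz).pow 2).congr_deriv ?_
    rw [Nat.add_one_sub_one, pow_one, ← inv_pow]
    push_cast
    ring
  -- The terms in `z⁻³` cancel: `8 z⁻³ = 2 (3 - 4) z⁻¹ (-4 z⁻²)`.
  set k : ℂ → ℂ := fun z => z ^ 2 * (deriv (deriv g₂) z / 2 - (g₁ z - g₂ z) * deriv g₂ z)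
    + z * deriv g₂ z + 4 * (g₁ z - g₂ z) with hk
  have hc₁e : ∀ z : ℂ, z ≠ 0 → ‖z‖ < ε → c₁ z = (z⁻¹) ^ 2 * k z := by
    intro z hz hzε
    have h1 := ((hsq z hz).const_mul (-4)).add
      (hg₂' z hzε).deriv.differentiableAt.hasDerivAt
    have h2 := h1.congr_of_eventuallyEq ((hnhds z hz hzε).mono fun w hw => hb₂e w hw.1 hw.2)
    have h3 := (hode' z hz hzε).2.2.1.unique h2
    rw [ha₁e z hz hzε, ha₂e z hz hzε, hb₂e z hz hzε] at h3
    have h4 : c₁ z = (-4 * (-2 * z⁻¹ ^ 3) + deriv (deriv g₂) z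
        - 2 * (3 * z⁻¹ + g₁ z - (4 * z⁻¹ + g₂ z)) * (-4 * z⁻¹ ^ 2 + deriv g₂ z)) / 2 := by
      linear_combination h3 / 2
    rw [h4, hk]
    field_simp
    ring
  have hka : ∀ z : ℂ, ‖z‖ < ε → AnalyticAt ℂ k z := by
    intro z hzε
    have := hg₂' z hzε
    have := hg₁' z hzε
    have := (hg₂' z hzε).deriv
    have := (hg₂' z hzε).deriv.deriv
    fun_prop (disch := norm_num)
  clear_value k
  have hd₁e : ∀ z : ℂ, z ≠ 0 → ‖z‖ < ε →
      z ^ 6 * d₁ z = z ^ 4 * deriv k z / 2 + z ^ 3 * k z + z ^ 4 * g₂ z * k z / 2 := by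
    intro z hz hzε
    have h1 := (hsq z hz).mul (hka z hzε).differentiableAt.hasDerivAt
    have h2 := h1.congr_of_eventuallyEq ((hnhds z hz hzε).mono fun w hw => hc₁e w hw.1 hw.2)
    have h3 := (hode' z hz hzε).2.2.2.2.1.unique h2
    rw [ha₂e z hz hzε, hc₁e z hz hzε] at h3
    field_simp at h3
    linear_combination (z ^ 3 / 2) * h3
  have hpunct : ∀ᶠ z in 𝓝[≠] (0 : ℂ), z ≠ 0 ∧ ‖z‖ < ε := by
    filter_upwards [self_mem_nhdsWithin, mem_nhdsWithin_of_mem_nhds (ball_mem_nhds 0 hεpos)]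
      with z hz hzε using ⟨hz, by simpa using hzε⟩
  have h00 : ‖(0 : ℂ)‖ < ε := by simpa using hεpos
  have hd₁z : ∀ z : ℂ, z ≠ 0 → ‖z‖ < ε → d₁ z = 0 := by
    intro z hz hzε
    have := eq_zero_of_hasDerivAt_mul_of_tendsto_zero (h := fun z => z ^ 6 * d₁ z)
      (p := fun z => -2 * g₁ z) (ε := ε) ?_ ?_ ?_ z hz hzε
    · simpa [hz] using this
    · intro w hw
      have := (hg₁' w (by simpa using hw)).differentiableAt
      exact (this.const_mul _).differentiableWithinAt
    · intro w hw hwε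
      refine ((hasDerivAt_pow 6 w).mul (hode' w hw hwε).2.2.2.2.2).congr_deriv ?_
      rw [ha₁e w hw hwε]
      field_simp
      push_cast
      ring
    · have hc : ContinuousAt (fun z => z ^ 4 * deriv k z / 2 + z ^ 3 * k z
          + z ^ 4 * g₂ z * k z / 2) 0 := by
        have := (hka 0 h00).continuousAt
        have := (hka 0 h00).deriv.continuousAt
        have := (hg₂' 0 h00).continuousAt
        fun_prop
      have ht := hc.tendsto.mono_left (nhdsWithin_le_nhds (s := {0}ᶜ))
      simp only [ne_eq, OfNat.ofNat_ne_zero, not_false_eq_true, zero_pow, zero_mul, zero_div,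
        add_zero] at ht
      exact ht.congr' (hpunct.mono fun w hw => (hd₁e w hw.1 hw.2).symm)
  refine ⟨ε, hεpos, fun z hz hzε => ⟨?_, hd₁z z hz hzε⟩⟩
  have := eq_zero_of_hasDerivAt_mul_of_tendsto_zero (h := fun z => z ^ 4 * c₁ z)
    (p := fun z => -g₂ z) (ε := ε) ?_ ?_ ?_ z hz hzε
  · simpa [hz] using this
  · intro w hw
    have := (hg₂' w (by simpa using hw)).differentiableAt
    exact this.neg.differentiableWithinAt
  · intro w hw hwε
    refine ((hasDerivAt_pow 4 w).mul (hode' w hw hwε).2.2.2.2.1).congr_deriv ?_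
    rw [ha₂e w hw hwε, hd₁z w hw hwε]
    field_simp
    push_cast
    ring
  · have hc : ContinuousAt (fun z => z ^ 2 * k z) 0 := by
      have := (hka 0 h00).continuousAt
      fun_prop
    have ht := hc.tendsto.mono_left (nhdsWithin_le_nhds (s := {0}ᶜ))
    simp only [ne_eq, OfNat.ofNat_ne_zero, not_false_eq_true, zero_pow, zero_mul] at ht
    refine ht.congr' (hpunct.mono fun w hw => ?_)
    have := hw.1
    simp only [hc₁e w hw.1 hw.2]
    field_simp
end
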